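/- arXiv:2106.11372 — 12 statements merged into one kernel-verified Lean document; each statement's English description precedes it below -/
import Mathlib

section
/- Let ℓ ≥ 2 be a real parameter. For every LBUBFL instance with uniform bounds and every feasible fractional LP solution (x*, y*), there exist F' ⊆ F and σ : C → F' such that (1 − 1/ℓ)·L ≤ |σ⁻¹(i)| ≤ (2 − 1/ℓ)·U for every i ∈ F', and Σ_{i ∈ F'} f i + Σ_{j ∈ C} dist(j, σ(j)) ≤ (10ℓ + 4)·LPcost(x*, y*). -/
def ldf {X : Type} [DecidableEq X] (C : Finset X) (τ : X → X) (i : X) : ℕ :=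
  (C.filter (fun j => τ j = i)).card

def mvf {X : Type} [DecidableEq X] (τ : X → X) (Q : Finset X) (b : X) : X → X :=
  fun j => if j ∈ Q then b else τ j

lemma mvf_src {X : Type} [DecidableEq X] (C : Finset X) (τ : X → X) (Q : Finset X) (a b : X)
    (hQ : Q ⊆ C.filter (fun j => τ j = a)) (hab : a ≠ b) :
    ldf C (mvf τ Q b) a + Q.card = ldf C τ a := by
  unfold ldf
  have : C.filter (fun j => mvf τ Q b j = a) = (C.filter (fun j => τ j = a)) \ Q := by
    ext j
    rw [Finset.mem_sdiff, Finset.mem_filter, Finset.mem_filter]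
    unfold mvf
    by_cases h : j ∈ Q <;> simp [h, hab.symm]
  rw [this]
  exact Finset.card_sdiff_add_card_eq_card hQ

lemma mvf_dst {X : Type} [DecidableEq X] (C : Finset X) (τ : X → X) (Q : Finset X) (a b : X)
    (hQ : Q ⊆ C.filter (fun j => τ j = a)) (hab : a ≠ b) :
    ldf C (mvf τ Q b) b = ldf C τ b + Q.card := by
  unfold ldf
  have : C.filter (fun j => mvf τ Q b j = b) = (C.filter (fun j => τ j = b)) ∪ Q := by
    ext j
    rw [Finset.mem_union, Finset.mem_filter, Finset.mem_filter]
    unfold mvf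
    by_cases h : j ∈ Q
    · simp [h, (Finset.mem_filter.1 (hQ h)).1]
    · simp [h]
  rw [this]
  apply Finset.card_union_of_disjoint
  rw [Finset.disjoint_left]
  intro j hj hj'
  have h1 := (Finset.mem_filter.1 hj).2
  have h2 := (Finset.mem_filter.1 (hQ hj')).2
  exact hab (h2.symm.trans h1)

lemma mvf_oth {X : Type} [DecidableEq X] (C : Finset X) (τ : X → X) (Q : Finset X) (a b i : X)
    (hQ : Q ⊆ C.filter (fun j => τ j = a)) (hia : i ≠ a) (hib : i ≠ b) :
    ldf C (mvf τ Q b) i = ldf C τ i := by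
  unfold ldf
  congr 1
  apply Finset.filter_congr
  intro j hj
  unfold mvf
  by_cases h : j ∈ Q
  · have h2 := (Finset.mem_filter.1 (hQ h)).2
    simp [h, h2, hia.symm, hib.symm]
  · simp [h]

lemma mvf_cost {X : Type} [DecidableEq X] (C : Finset X) (τ : X → X) (Q : Finset X) (a b : X)
    (hQ : Q ⊆ C.filter (fun j => τ j = a)) (φ : X → X → ℝ) (δ : ℝ)
    (hφ : ∀ j ∈ Q, φ j b ≤ φ j a + δ) :
    ∑ j ∈ C, φ j (mvf τ Q b j) ≤ ∑ j ∈ C, φ j (τ j) + Q.card * δ := by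
  have hQC : Q ⊆ C := fun j hj => (Finset.mem_filter.1 (hQ hj)).1
  have : (Q.card : ℝ) * δ = ∑ j ∈ C, if j ∈ Q then δ else 0 := by
    rw [← Finset.sum_filter, Finset.filter_mem_eq_inter, Finset.inter_eq_right.2 hQC]
    simp
  rw [this, ← Finset.sum_add_distrib]
  apply Finset.sum_le_sum
  intro j hj
  unfold mvf
  by_cases h : j ∈ Q
  · have h2 := (Finset.mem_filter.1 (hQ h)).2
    simpa [h, h2] using hφ j h
  · simp [h]

lemma mvf_mem {X : Type} [DecidableEq X] (C O : Finset X) (τ : X → X) (Q : Finset X) (b : X)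
    (hb : b ∈ O) (h : ∀ j ∈ C, τ j ∈ O) : ∀ j ∈ C, mvf τ Q b j ∈ O := by
  intro j hj
  unfold mvf
  split_ifs
  · exact hb
  · exact h j hj

lemma sel_lemma {X : Type} [DecidableEq X] (r : X → ℝ) (conf : X → X → Prop)
    (hs : ∀ a b, conf a b → conf b a) (S : Finset X) :
    ∃ T ⊆ S, (∀ a ∈ T, ∀ b ∈ T, a ≠ b → ¬ conf a b) ∧
      ∀ s ∈ S, ∃ t ∈ T, r t ≤ r s ∧ (t = s ∨ conf s t) := by
  classical
  induction S using Finset.strongInduction with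
  | H S ih =>
    rcases S.eq_empty_or_nonempty with rfl | hne
    · exact ⟨∅, by simp⟩
    obtain ⟨a, ha, hmin⟩ := Finset.exists_min_image S r hne
    obtain ⟨T, hTS, hT, hcov⟩ := ih (S.filter (fun b => b ≠ a ∧ ¬ conf a b))
      (Finset.filter_ssubset.2 ⟨a, ha, by simp⟩)
    refine ⟨insert a T, ?_, ?_, ?_⟩
    · intro b hb
      rcases Finset.mem_insert.1 hb with rfl | hb
      · exact ha
      · exact (Finset.mem_filter.1 (hTS hb)).1
    · intro b hb c hc hbc
      rcases Finset.mem_insert.1 hb with e | hb1 <;> rcases Finset.mem_insert.1 hc with e' | hc1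
      · exact absurd (e.trans e'.symm) hbc
      · rw [e]; exact (Finset.mem_filter.1 (hTS hc1)).2.2
      · rw [e']; exact fun h => (Finset.mem_filter.1 (hTS hb1)).2.2 (hs _ _ h)
      · exact hT b hb1 c hc1 hbc
    · intro s hsS
      by_cases h1 : s = a
      · exact ⟨a, by simp, by rw [h1], Or.inl h1.symm⟩
      by_cases h2 : conf a s
      · exact ⟨a, by simp, hmin s hsS, Or.inr (hs _ _ h2)⟩
      obtain ⟨t, ht, h3⟩ := hcov s (by simp [hsS, h1, h2])
      exact ⟨t, by simp [ht], h3⟩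

/-- within-cluster shifting -/
lemma shift_lemma {X : Type} [DecidableEq X] (F C : Finset X) (U : ℕ) (ν : X → X)
    (A : X → X → ℝ) (h : X → ℝ) (n : ℕ) : ∀ (σ : X → X)
    (_ : ∀ j ∈ C, σ j ∈ F) (_ : ∀ i ∈ F, ldf C σ i ≤ U)
    (_ : (F.filter (fun i => 0 < ldf C σ i ∧ ldf C σ i < U)).card = n),
    ∃ σ' : X → X, (∀ j ∈ C, σ' j ∈ F) ∧ (∀ i ∈ F, ldf C σ' i ≤ U) ∧
      (∑ j ∈ C, (A j (ν (σ' j)) + h (σ' j)) ≤ ∑ j ∈ C, (A j (ν (σ j)) + h (σ j))) ∧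
      ∀ i ∈ F, ∀ i' ∈ F, ν i = ν i' → (0 < ldf C σ' i ∧ ldf C σ' i < U) →
        (0 < ldf C σ' i' ∧ ldf C σ' i' < U) → i = i' := by
  induction n using Nat.strong_induction_on with
  | _ n ih =>
    intro σ hσ hld hn
    by_cases hbad : ∃ i ∈ F, ∃ i' ∈ F, ν i = ν i' ∧ (0 < ldf C σ i ∧ ldf C σ i < U) ∧
        (0 < ldf C σ i' ∧ ldf C σ i' < U) ∧ i ≠ i' ∧ h i ≤ h i'
    · obtain ⟨i, hi, i', hi', hν, hp, hp', hne, hh⟩ := hbad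
      obtain ⟨Q, hQ, hQc⟩ := Finset.exists_subset_card_eq
        (s := C.filter (fun j => σ j = i')) (n := min (U - ldf C σ i) (ldf C σ i'))
        (min_le_right _ _)
      have e1 := mvf_src C σ Q i' i hQ hne.symm
      have e2 := mvf_dst C σ Q i' i hQ hne.symm
      have e3 := fun k => mvf_oth C σ Q i' i k hQ
      have ec := mvf_cost C σ Q i' i hQ (fun j k => A j (ν k) + h k) 0
        (by intro j _; simp only [hν]; linarith)
      have hld' : ∀ k ∈ F, ldf C (mvf σ Q i) k ≤ U := by
        intro k hk
        by_cases k1 : k = i'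
        · subst k1; have := hld k hk; omega
        by_cases k2 : k = i
        · subst k2; have := hld k hk; omega
        rw [e3 k k1 k2]; exact hld k hk
      have hlt : (F.filter (fun k => 0 < ldf C (mvf σ Q i) k ∧ ldf C (mvf σ Q i) k < U)).card
          < n := by
        rw [← hn]
        apply Finset.card_lt_card
        refine Finset.ssubset_iff_subset_ne.2 ⟨?_, ?_⟩
        · intro k hk
          rw [Finset.mem_filter] at hk ⊢
          refine ⟨hk.1, ?_⟩
          by_cases k1 : k = i'
          · subst k1; exact hp'
          by_cases k2 : k = i
          · subst k2; exact hp
          rw [← e3 k k1 k2]; exact hk.2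
        · intro heq
          have h1 : i ∈ F.filter (fun k => 0 < ldf C (mvf σ Q i) k ∧ ldf C (mvf σ Q i) k < U) := by
            rw [heq]; simp [hi, hp]
          have h2 : i' ∈ F.filter (fun k => 0 < ldf C (mvf σ Q i) k ∧ ldf C (mvf σ Q i) k < U) := by
            rw [heq]; simp [hi', hp']
          have h1 := (Finset.mem_filter.1 h1).2
          have h2 := (Finset.mem_filter.1 h2).2
          omega
      obtain ⟨σ', a1, a2, a3, a4⟩ := ih _ hlt (mvf σ Q i) (mvf_mem C F σ Q i hi hσ) hld' rfl
      refine ⟨σ', a1, a2, ?_, a4⟩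
      simp only [mul_zero, add_zero] at ec
      exact a3.trans ec
    · refine ⟨σ, hσ, hld, le_rfl, ?_⟩
      intro i hi i' hi' hν hp hp'
      by_contra hne
      rcases le_total (h i) (h i') with hh | hh
      · exact hbad ⟨i, hi, i', hi', hν, hp, hp', hne, hh⟩
      · exact hbad ⟨i', hi', i, hi, hν.symm, hp', hp, fun e => hne e.symm, hh⟩
/-- integral transportation via Birkhoff -/
lemma transport_lemma {X : Type} [DecidableEq X] (F C : Finset X) (U : ℕ) (hU : 0 < U)
    (x : X → X → ℝ) (κ : X → X → ℝ)
    (hx1 : ∀ j ∈ C, ∑ i ∈ F, x i j = 1)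
    (hub : ∀ i ∈ F, ∑ j ∈ C, x i j ≤ (U : ℝ))
    (hx0 : ∀ i ∈ F, ∀ j ∈ C, 0 ≤ x i j) :
    ∃ σ : X → X, (∀ j ∈ C, σ j ∈ F) ∧ (∀ i ∈ F, ldf C σ i ≤ U) ∧
      ∑ j ∈ C, κ j (σ j) ≤ ∑ j ∈ C, ∑ i ∈ F, x i j * κ j i := by
  classical
  have hU' : (0 : ℝ) < U := by exact_mod_cast hU
  have htot : ∑ i ∈ F, ∑ j ∈ C, x i j = (C.card : ℝ) := by
    rw [Finset.sum_comm, Finset.sum_congr rfl hx1]; simp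
  have hNn : C.card ≤ F.card * U := by
    have : (C.card : ℝ) ≤ F.card * U := by
      rw [← htot]
      calc _ ≤ ∑ i ∈ F, (U : ℝ) := Finset.sum_le_sum hub
        _ = _ := by simp
    exact_mod_cast this
  obtain ⟨D, hD⟩ := Nat.exists_eq_add_of_le hNn
  have hDr : (F.card : ℝ) * U = C.card + D := by exact_mod_cast hD
  have hcard : Fintype.card (F × Fin U) = Fintype.card (C ⊕ Fin D) := by
    simp [hD]
  let e : (F × Fin U) ≃ (C ⊕ Fin D) := Fintype.equivOfCardEq hcard
  let K : (F × Fin U) → (C ⊕ Fin D) → ℝ := fun s t => match t with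
    | Sum.inl j => x s.1 j / U
    | Sum.inr _ => (1 - (∑ j ∈ C, x s.1 j) / U) / D
  let M : Matrix (F × Fin U) (F × Fin U) ℝ := fun s t => K s (e t)
  have hM : M ∈ doublyStochastic ℝ (F × Fin U) := by
    rw [mem_doublyStochastic_iff_sum]
    refine ⟨?_, ?_, ?_⟩
    · intro s t
      show 0 ≤ K s (e t)
      rcases e t with j | d
      · exact div_nonneg (hx0 _ s.1.2 _ j.2) hU'.le
      · refine div_nonneg ?_ (Nat.cast_nonneg _)
        rw [sub_nonneg, div_le_one hU']
        exact hub _ s.1.2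
    · intro s
      show ∑ t, K s (e t) = 1
      rw [Equiv.sum_comp e (K s), Fintype.sum_sum_type]
      simp only [K, Finset.sum_const, Finset.card_univ, Fintype.card_fin, nsmul_eq_mul]
      rw [Finset.univ_eq_attach, Finset.sum_attach C (fun j => x s.1 j / U), ← Finset.sum_div]
      rcases Nat.eq_zero_or_pos D with h0 | h0
      · have hall : ∀ i ∈ F, ∑ j ∈ C, x i j = (U : ℝ) := by
          apply (Finset.sum_eq_sum_iff_of_le hub).1
          rw [htot]; simp [hDr, h0]
        rw [hall _ s.1.2, h0]
        simp [hU'.ne']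
      · have : (D : ℝ) ≠ 0 := by positivity
        field_simp
        ring
    · intro t
      show ∑ s, K s (e t) = 1
      rw [Fintype.sum_prod_type]
      rcases h : e t with j | d
      · simp only [K, Finset.sum_const, Finset.card_univ, Fintype.card_fin, nsmul_eq_mul]
        rw [Finset.univ_eq_attach, Finset.sum_attach F (fun i => (U : ℝ) * (x i j / U))]
        rw [← hx1 _ j.2]
        apply Finset.sum_congr rfl
        intro i _
        field_simp
      · simp only [K, Finset.sum_const, Finset.card_univ, Fintype.card_fin, nsmul_eq_mul]
        rw [Finset.univ_eq_attach,
          Finset.sum_attach F (fun i => (U : ℝ) * ((1 - (∑ j ∈ C, x i j) / U) / D))]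
        have h0 : (D : ℝ) ≠ 0 := by
          have := d.pos
          positivity
        have : ∀ i ∈ F, (U : ℝ) * ((1 - (∑ j ∈ C, x i j) / U) / D)
            = (U - ∑ j ∈ C, x i j) / D := by
          intro i _; field_simp
        rw [Finset.sum_congr rfl this, ← Finset.sum_div, Finset.sum_sub_distrib, htot]
        simp only [Finset.sum_const, nsmul_eq_mul]
        rw [hDr]; field_simp; ring
  obtain ⟨w, hw0, hw1, hwM⟩ := exists_eq_sum_perm_of_mem_doublyStochastic hM
  let cst : (F × Fin U) → (C ⊕ Fin D) → ℝ := fun s t => match t with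
    | Sum.inl j => κ j s.1
    | Sum.inr _ => 0
  let σπ : Equiv.Perm (F × Fin U) → X → X := fun π j =>
    if h : j ∈ C then ((π.symm (e.symm (Sum.inl ⟨j, h⟩))).1 : X) else j
  have hcost : ∀ π : Equiv.Perm (F × Fin U),
      ∑ s, ∑ t, Equiv.Perm.permMatrix ℝ π s t * cst s (e t) = ∑ j ∈ C, κ j (σπ π j) := by
    intro π
    have h1 : ∀ s, ∑ t, Equiv.Perm.permMatrix ℝ π s t * cst s (e t) = cst s (e (π s)) := by
      intro s
      rw [Finset.sum_eq_single (π s)]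
      · simp [Equiv.Perm.permMatrix, PEquiv.toMatrix_apply]
      · intro t _ ht
        simp [Equiv.Perm.permMatrix, PEquiv.toMatrix_apply, ht.symm]
      · simp
    simp only [h1]
    rw [← Equiv.sum_comp π.symm]
    simp only [Equiv.apply_symm_apply]
    rw [← Equiv.sum_comp e.symm]
    simp only [Equiv.apply_symm_apply]
    rw [Fintype.sum_sum_type]
    simp only [cst, Finset.sum_const_zero, add_zero]
    rw [← Finset.sum_attach C, Finset.univ_eq_attach]
    apply Finset.sum_congr rfl
    intro j _
    simp [σπ]
  have hMc : ∑ s, ∑ t, M s t * cst s (e t) = ∑ j ∈ C, ∑ i ∈ F, x i j * κ j i := by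
    have h1 : ∀ s, ∑ t, M s t * cst s (e t) = ∑ j ∈ C, x s.1 j / U * κ j s.1 := by
      intro s
      show ∑ t, K s (e t) * cst s (e t) = _
      rw [Equiv.sum_comp e (fun t => K s t * cst s t), Fintype.sum_sum_type]
      simp only [K, cst, mul_zero, Finset.sum_const_zero, add_zero]
      rw [Finset.univ_eq_attach, Finset.sum_attach C (fun j => x s.1 j / U * κ j s.1)]
    simp only [h1]
    rw [Fintype.sum_prod_type]
    simp only [Finset.sum_const, Finset.card_univ, Fintype.card_fin, nsmul_eq_mul]
    rw [Finset.univ_eq_attach,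
      Finset.sum_attach F (fun i => (U : ℝ) * ∑ j ∈ C, x i j / U * κ j i), Finset.sum_comm]
    apply Finset.sum_congr rfl
    intro i _
    rw [Finset.mul_sum]
    apply Finset.sum_congr rfl
    intro j _
    field_simp
  have hex : ∃ π : Equiv.Perm (F × Fin U),
      ∑ j ∈ C, κ j (σπ π j) ≤ ∑ j ∈ C, ∑ i ∈ F, x i j * κ j i := by
    by_contra hcon
    push Not at hcon
    have hsum : ∑ π, w π * ∑ j ∈ C, κ j (σπ π j) = ∑ j ∈ C, ∑ i ∈ F, x i j * κ j i := by
      rw [← hMc, ← hwM]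
      simp only [Matrix.sum_apply, Matrix.smul_apply, smul_eq_mul, Finset.sum_mul]
      rw [Finset.sum_congr rfl (fun π _ => by rw [← hcost π])]
      simp only [Finset.mul_sum]
      rw [Finset.sum_comm]
      apply Finset.sum_congr rfl
      intro s _
      rw [Finset.sum_comm]
      apply Finset.sum_congr rfl
      intro t _
      apply Finset.sum_congr rfl
      intro π _
      ring
    have hlt : ∑ π, w π * (∑ j ∈ C, ∑ i ∈ F, x i j * κ j i)
        < ∑ π, w π * ∑ j ∈ C, κ j (σπ π j) := by
      apply Finset.sum_lt_sum
      · intro π _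
        exact mul_le_mul_of_nonneg_left (hcon π).le (hw0 π)
      · by_contra hno
        push Not at hno
        have : ∀ π, w π = 0 := by
          intro π
          rcases (hw0 π).eq_or_lt with h | h
          · exact h.symm
          · exact absurd (mul_lt_mul_of_pos_left (hcon π) h) (not_lt.2 (hno π (Finset.mem_univ _)))
        simp [this] at hw1
    rw [← Finset.sum_mul, hw1, one_mul, hsum] at hlt
    exact lt_irrefl _ hlt
  obtain ⟨π, hπ⟩ := hex
  refine ⟨σπ π, ?_, ?_, hπ⟩
  · intro j hj
    simp only [σπ, hj, dif_pos]
    exact (π.symm (e.symm (Sum.inl ⟨j, hj⟩))).1.2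
  · intro i hi
    unfold ldf
    rw [← Fintype.card_fin U, ← Finset.card_univ]
    apply Finset.card_le_card_of_injOn
      (fun j => if h : j ∈ C then (π.symm (e.symm (Sum.inl ⟨j, h⟩))).2 else ⟨0, hU⟩)
    · intro j _; simp
    · intro j hj k hk hjk
      simp only [Finset.coe_filter, Set.mem_ofPred_eq] at hj hk
      obtain ⟨hjC, hj2⟩ := hj
      obtain ⟨hkC, hk2⟩ := hk
      simp only [σπ, hjC, hkC, dif_pos] at hj2 hk2 hjk
      have : π.symm (e.symm (Sum.inl ⟨j, hjC⟩)) = π.symm (e.symm (Sum.inl ⟨k, hkC⟩)) :=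
        Prod.ext (Subtype.ext (hj2.trans hk2.symm)) hjk
      simpa using this

lemma cfl_lemma {X : Type} [MetricSpace X] [DecidableEq X] (F C : Finset X) (hC : C.Nonempty)
    (g : X → ℝ) (U V : ℕ) (hU : 0 < U) (hUV : U ≤ V) (hV2 : V < 2 * U) (hV3 : 3 * U ≤ 2 * (V + 1))
    (hg : ∀ i ∈ F, 0 ≤ g i)
    (x : X → X → ℝ) (y : X → ℝ)
    (hx1 : ∀ j ∈ C, ∑ i ∈ F, x i j = 1)
    (hub : ∀ i ∈ F, ∑ j ∈ C, x i j ≤ (U : ℝ) * y i)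
    (hx0 : ∀ i ∈ F, ∀ j ∈ C, 0 ≤ x i j)
    (hxy : ∀ i ∈ F, ∀ j ∈ C, x i j ≤ y i)
    (hy1 : ∀ i ∈ F, y i ≤ 1) :
    ∃ (O : Finset X) (σ : X → X), O ⊆ F ∧ (∀ j ∈ C, σ j ∈ O) ∧ (∀ i ∈ O, ldf C σ i ≤ V) ∧
      (∑ i ∈ O, g i) + (∑ j ∈ C, dist j (σ j)) ≤
        4 * (∑ i ∈ F, g i * y i) + 11 * ∑ i ∈ F, ∑ j ∈ C, dist i j * x i j := by
  classical
  have hU' : (0 : ℝ) < U := by exact_mod_cast hU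
  obtain ⟨j₀, hj₀⟩ := hC
  have hy0 : ∀ i ∈ F, 0 ≤ y i := fun i hi => (hx0 i hi j₀ hj₀).trans (hxy i hi j₀ hj₀)
  obtain ⟨Cj, hCj⟩ : ∃ Cj : X → ℝ, ∀ j, Cj j = ∑ i ∈ F, dist i j * x i j := ⟨_, fun _ => rfl⟩
  have hCj0 : ∀ j ∈ C, 0 ≤ Cj j := by
    intro j hj
    rw [hCj]
    exact Finset.sum_nonneg fun i hi => mul_nonneg dist_nonneg (hx0 i hi j hj)
  obtain ⟨Ball, hBall⟩ : ∃ Ball : X → Finset X,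
      ∀ j, Ball j = F.filter (fun i => dist i j ≤ 2 * Cj j) := ⟨_, fun _ => rfl⟩
  have hBF : ∀ j, Ball j ⊆ F := fun j => by rw [hBall]; exact Finset.filter_subset _ _
  have hBd : ∀ j, ∀ i ∈ Ball j, dist i j ≤ 2 * Cj j := fun j i hi => by
    rw [hBall] at hi; exact (Finset.mem_filter.1 hi).2
  have hmass : ∀ j ∈ C, (1 : ℝ) / 2 ≤ ∑ i ∈ Ball j, x i j := by
    intro j hj
    have hsplit := Finset.sum_filter_add_sum_filter_not F (fun i => dist i j ≤ 2 * Cj j)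
      (fun i => x i j)
    rw [hx1 j hj, ← hBall] at hsplit
    have hfar : (2 * Cj j) * ∑ i ∈ F.filter (fun i => ¬ dist i j ≤ 2 * Cj j), x i j ≤ Cj j := by
      rw [Finset.mul_sum]
      refine le_trans ?_ (hCj j).ge
      calc _ ≤ ∑ i ∈ F.filter (fun i => ¬ dist i j ≤ 2 * Cj j), dist i j * x i j := by
            apply Finset.sum_le_sum
            intro i hi
            rw [Finset.mem_filter] at hi
            exact mul_le_mul_of_nonneg_right (not_le.1 hi.2).le (hx0 i hi.1 j hj)
        _ ≤ _ := Finset.sum_le_sum_of_subset_of_nonneg (Finset.filter_subset _ _)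
            (fun i hi _ => mul_nonneg dist_nonneg (hx0 i hi j hj))
    rcases (hCj0 j hj).eq_or_lt with h0 | h0
    · have hz : ∑ i ∈ F.filter (fun i => ¬ dist i j ≤ 2 * Cj j), x i j = 0 := by
        apply Finset.sum_eq_zero
        intro i hi
        rw [Finset.mem_filter] at hi
        have h1 : ∀ i ∈ F, dist i j * x i j = 0 := by
          apply (Finset.sum_eq_zero_iff_of_nonneg
            (fun i hi => mul_nonneg dist_nonneg (hx0 i hi j hj))).1
          rw [← hCj, ← h0]
        have h2 : dist i j ≠ 0 := by
          have := not_le.1 hi.2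
          rw [← h0] at this
          linarith
        exact (mul_eq_zero.1 (h1 i hi.1)).resolve_left h2
      linarith
    · have : ∑ i ∈ F.filter (fun i => ¬ dist i j ≤ 2 * Cj j), x i j ≤ 1 / 2 := by
        by_contra hcon
        have hcon := not_le.1 hcon
        nlinarith
      linarith
  obtain ⟨J, hJC, hJd, hJcov⟩ := sel_lemma Cj (fun a b => ¬ Disjoint (Ball a) (Ball b))
    (fun a b h h' => h h'.symm) C
  have hJd' : ∀ a ∈ J, ∀ b ∈ J, a ≠ b → Disjoint (Ball a) (Ball b) :=
    fun a ha b hb hab => not_not.1 (hJd a ha b hb hab)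
  have hcov : ∀ j ∈ C, ∃ t ∈ J, Cj t ≤ Cj j ∧ dist j t ≤ 4 * Cj j := by
    intro j hj
    obtain ⟨t, ht, h1, h2⟩ := hJcov j hj
    refine ⟨t, ht, h1, ?_⟩
    rcases h2 with rfl | h2
    · have := hCj0 t hj
      rw [dist_self]; linarith
    · obtain ⟨i, hi1, hi2⟩ := Finset.not_disjoint_iff.1 h2
      have e1 := hBd _ _ hi1
      have e2 := hBd _ _ hi2
      have := dist_triangle_left j t i
      linarith
  have hb : ∀ k, ∃ b, k ∈ J → b ∈ Ball k ∧ g b ≤ 2 * ∑ i ∈ Ball k, g i * y i := by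
    intro k
    by_cases hk : k ∈ J
    swap
    · exact ⟨k, fun h => absurd h hk⟩
    have hm := hmass k (hJC hk)
    have hne : (Ball k).Nonempty := by
      rw [Finset.nonempty_iff_ne_empty]
      intro h
      rw [h] at hm
      norm_num at hm
    obtain ⟨b, hbB, hmin⟩ := Finset.exists_min_image (Ball k) g hne
    refine ⟨b, fun _ => ⟨hbB, ?_⟩⟩
    have h1 : g b * ∑ i ∈ Ball k, x i k ≤ ∑ i ∈ Ball k, g i * y i := by
      rw [Finset.mul_sum]
      apply Finset.sum_le_sum
      intro i hi
      have hiF := hBF k hi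
      exact mul_le_mul (hmin i hi) (hxy i hiF k (hJC hk)) (hx0 i hiF k (hJC hk)) (hg i hiF)
    have h2 := mul_le_mul_of_nonneg_left hm (hg b (hBF k hbB))
    linarith
  choose b hb using hb
  have hbinj : ∀ k ∈ J, ∀ k' ∈ J, b k = b k' → k = k' := by
    intro k hk k' hk' h
    by_contra hne
    have h1 := (hb k hk).1
    have h2 := (hb k' hk').1
    rw [h] at h1
    exact Finset.disjoint_left.1 (hJd' k hk k' hk' hne) h1 h2
  have hν : ∀ i, ∃ (k : X) (D : ℝ), k ∈ J ∧ dist i k ≤ D ∧ 2 * Cj k ≤ D ∧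
      ∀ j ∈ C, D ≤ dist i j + 4 * Cj j := by
    intro i
    obtain ⟨p, hp, hmin⟩ := Finset.exists_min_image C (fun j => dist i j + 4 * Cj j) ⟨j₀, hj₀⟩
    obtain ⟨t, ht, h1, h2⟩ := hcov p hp
    refine ⟨t, dist i p + 4 * Cj p, ht, ?_, ?_, hmin⟩
    · linarith [dist_triangle i p t]
    · have := hCj0 p hp
      have := dist_nonneg (x := i) (y := p)
      linarith
  choose ν D hνJ hνd hνC hνD using hν
  have hubU : ∀ i ∈ F, ∑ j ∈ C, x i j ≤ (U : ℝ) := by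
    intro i hi
    refine (hub i hi).trans ?_
    have := mul_le_mul_of_nonneg_left (hy1 i hi) hU'.le
    linarith
  obtain ⟨σ₁, hσ₁F, hσ₁U, hσ₁c⟩ := transport_lemma F C U hU x
    (fun j i => dist j (ν i) + (2 * g i / U + D i)) hx1 hubU hx0
  obtain ⟨σ, hσF, hσU, hσc, hσp⟩ := shift_lemma F C U ν dist (fun i => 2 * g i / U + D i) _ σ₁
    hσ₁F hσ₁U rfl
  have hfrac : ∑ j ∈ C, ∑ i ∈ F, x i j * (dist j (ν i) + (2 * g i / U + D i)) ≤
      2 * (∑ i ∈ F, g i * y i) + 11 * ∑ i ∈ F, ∑ j ∈ C, dist i j * x i j := by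
    have h1 : ∑ j ∈ C, ∑ i ∈ F, x i j * (dist j (ν i) + (2 * g i / U + D i)) ≤
        ∑ j ∈ C, ∑ i ∈ F, (2 * g i / U * x i j + 3 * (dist i j * x i j) + 8 * (Cj j * x i j)) := by
      apply Finset.sum_le_sum
      intro j hj
      apply Finset.sum_le_sum
      intro i hi
      have e1 := hνD i j hj
      have e2 := hνd i
      have e3 := dist_triangle_left j (ν i) i
      have := mul_le_mul_of_nonneg_left
        (show dist j (ν i) + (2 * g i / U + D i) ≤ 2 * g i / U + 3 * dist i j + 8 * Cj j by linarith)
        (hx0 i hi j hj)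
      linarith
    refine h1.trans ?_
    simp only [Finset.sum_add_distrib]
    have t1 : ∑ j ∈ C, ∑ i ∈ F, 2 * g i / U * x i j ≤ 2 * (∑ i ∈ F, g i * y i) := by
      rw [Finset.sum_comm, Finset.mul_sum]
      apply Finset.sum_le_sum
      intro i hi
      rw [← Finset.mul_sum]
      have := mul_le_mul_of_nonneg_left (hub i hi)
        (show 0 ≤ 2 * g i / U from div_nonneg (by linarith [hg i hi]) hU'.le)
      refine this.trans (le_of_eq ?_)
      field_simp
    have t2 : ∑ j ∈ C, ∑ i ∈ F, 3 * (dist i j * x i j) =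
        3 * ∑ i ∈ F, ∑ j ∈ C, dist i j * x i j := by
      rw [Finset.sum_comm]; simp only [Finset.mul_sum]
    have t3 : ∑ j ∈ C, ∑ i ∈ F, 8 * (Cj j * x i j) =
        8 * ∑ i ∈ F, ∑ j ∈ C, dist i j * x i j := by
      rw [Finset.sum_comm (s := F), Finset.mul_sum]
      apply Finset.sum_congr rfl
      intro j hj
      rw [← Finset.mul_sum, ← Finset.mul_sum, hx1 j hj, mul_one, hCj]
    linarith
  obtain ⟨w, hw⟩ := Nat.exists_eq_add_of_le hUV
  have hwU : w < U := by omega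
  let τ : X → X := fun j => if ldf C σ (σ j) ≤ w then b (ν (σ j)) else σ j
  refine ⟨J.image b ∪ F.filter (fun i => w < ldf C σ i), τ, ?_, ?_, ?_, ?_⟩
  · intro i hi
    rcases Finset.mem_union.1 hi with hi | hi
    · obtain ⟨k, hk, rfl⟩ := Finset.mem_image.1 hi
      exact hBF k (hb k hk).1
    · exact (Finset.mem_filter.1 hi).1
  · intro j hj
    show (if ldf C σ (σ j) ≤ w then b (ν (σ j)) else σ j) ∈ _
    split_ifs with h
    · exact Finset.mem_union_left _ (Finset.mem_image_of_mem _ (hνJ _))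
    · exact Finset.mem_union_right _ (Finset.mem_filter.2 ⟨hσF j hj, not_le.1 h⟩)
  · intro q hq
    have hqF : q ∈ F := by
      rcases Finset.mem_union.1 hq with hi | hi
      · obtain ⟨k, hk, rfl⟩ := Finset.mem_image.1 hi
        exact hBF k (hb k hk).1
      · exact (Finset.mem_filter.1 hi).1
    set E := C.filter (fun j => ldf C σ (σ j) ≤ w ∧ b (ν (σ j)) = q) with hE
    have hsub : C.filter (fun j => τ j = q) ⊆ C.filter (fun j => σ j = q) ∪ E := by
      intro j hj
      obtain ⟨hjC, hjq⟩ := Finset.mem_filter.1 hj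
      change (if ldf C σ (σ j) ≤ w then b (ν (σ j)) else σ j) = q at hjq
      split_ifs at hjq with h
      · exact Finset.mem_union_right _ (Finset.mem_filter.2 ⟨hjC, h, hjq⟩)
      · exact Finset.mem_union_left _ (Finset.mem_filter.2 ⟨hjC, hjq⟩)
    have hEw : E.card ≤ w := by
      rcases E.eq_empty_or_nonempty with h | ⟨j1, hj1⟩
      · rw [h]; simp
      obtain ⟨hj1C, h1w, h1b⟩ := Finset.mem_filter.1 hj1
      have hpos : ∀ j ∈ C, 0 < ldf C σ (σ j) := fun j hj =>
        Finset.card_pos.2 ⟨j, Finset.mem_filter.2 ⟨hj, rfl⟩⟩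
      refine le_trans (Finset.card_le_card (t := C.filter (fun j => σ j = σ j1)) ?_) h1w
      intro j hj
      obtain ⟨hjC, hjw, hjb⟩ := Finset.mem_filter.1 hj
      refine Finset.mem_filter.2 ⟨hjC, ?_⟩
      exact hσp _ (hσF j hjC) _ (hσF j1 hj1C)
        (hbinj _ (hνJ _) _ (hνJ _) (hjb.trans h1b.symm))
        ⟨hpos j hjC, by omega⟩ ⟨hpos j1 hj1C, by omega⟩
    have h1 := Finset.card_le_card hsub
    have h2 := Finset.card_union_le (C.filter (fun j => σ j = q)) E
    have h3 := hσU q hqF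
    unfold ldf at h3 ⊢
    omega
  · have f1 : ∑ i ∈ J.image b ∪ F.filter (fun i => w < ldf C σ i), g i ≤
        ∑ i ∈ J.image b, g i + ∑ i ∈ F.filter (fun i => w < ldf C σ i), g i := by
      rw [← Finset.sum_union_inter]
      have : 0 ≤ ∑ i ∈ J.image b ∩ F.filter (fun i => w < ldf C σ i), g i :=
        Finset.sum_nonneg fun i hi =>
          hg i (Finset.mem_filter.1 (Finset.mem_inter.1 hi).2).1
      linarith
    have f2 : ∑ i ∈ J.image b, g i ≤ 2 * ∑ i ∈ F, g i * y i := by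
      rw [Finset.sum_image (fun k hk k' hk' h => hbinj k hk k' hk' h)]
      calc _ ≤ ∑ k ∈ J, 2 * ∑ i ∈ Ball k, g i * y i :=
            Finset.sum_le_sum fun k hk => (hb k hk).2
        _ = 2 * ∑ i ∈ J.biUnion Ball, g i * y i := by
            rw [← Finset.mul_sum, Finset.sum_biUnion]
            intro k hk k' hk' hne
            exact hJd' k hk k' hk' hne
        _ ≤ _ := by
            apply mul_le_mul_of_nonneg_left _ (by norm_num)
            apply Finset.sum_le_sum_of_subset_of_nonneg
            · exact Finset.biUnion_subset.2 fun k _ => hBF k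
            · exact fun i hi _ => mul_nonneg (hg i hi) (hy0 i hi)
    have f3 : ∑ i ∈ F.filter (fun i => w < ldf C σ i), g i ≤ ∑ j ∈ C, 2 * g (σ j) / U := by
      rw [← Finset.sum_fiberwise_of_maps_to hσF, Finset.sum_filter]
      apply Finset.sum_le_sum
      intro i hi
      have e : ∑ j ∈ C with σ j = i, 2 * g (σ j) / (U : ℝ) = (ldf C σ i : ℝ) * (2 * g i / U) := by
        rw [Finset.sum_congr rfl (g := fun _ => 2 * g i / (U : ℝ))
          (fun j hj => by rw [(Finset.mem_filter.1 hj).2])]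
        simp [ldf]
      rw [e]
      have hgi := hg i hi
      split_ifs with h
      · have h2 : (U : ℝ) ≤ 2 * ldf C σ i := by
          have : U ≤ 2 * ldf C σ i := by omega
          exact_mod_cast this
        rw [← mul_div_assoc, le_div_iff₀ hU']
        nlinarith
      · positivity
    have f4 : ∑ j ∈ C, dist j (τ j) ≤ ∑ j ∈ C, (dist j (ν (σ j)) + D (σ j)) := by
      apply Finset.sum_le_sum
      intro j hj
      show dist j (if ldf C σ (σ j) ≤ w then b (ν (σ j)) else σ j) ≤ _
      split_ifs with h
      · have e1 := hBd _ _ (hb _ (hνJ (σ j))).1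
        have e2 := hνC (σ j)
        have e3 := dist_triangle_right j (b (ν (σ j))) (ν (σ j))
        linarith
      · have e1 := hνd (σ j)
        have e3 := dist_triangle_right j (σ j) (ν (σ j))
        linarith
    have f5 : ∑ j ∈ C, 2 * g (σ j) / U + ∑ j ∈ C, (dist j (ν (σ j)) + D (σ j)) =
        ∑ j ∈ C, (dist j (ν (σ j)) + (2 * g (σ j) / U + D (σ j))) := by
      rw [← Finset.sum_add_distrib]
      apply Finset.sum_congr rfl
      intro j _
      ring
    linarith

lemma fix_lemma {X : Type} [MetricSpace X] [DecidableEq X] (O C : Finset X) (m V : ℕ)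
    (hm : 1 ≤ m) (hmV : 2 * m ≤ V + 1) (ρ : X → ℝ) (hρ : ∀ i ∈ O, 0 ≤ ρ i)
    (hball : ∀ i ∈ O, m ≤ (C.filter (fun j => dist i j ≤ ρ i)).card)
    (σ : X → X) (hσO : ∀ j ∈ C, σ j ∈ O) (hσV : ∀ i ∈ O, ldf C σ i ≤ V) :
    ∃ (O' : Finset X) (τ : X → X), O' ⊆ O ∧ (∀ j ∈ C, τ j ∈ O') ∧
      (∀ i ∈ O', m ≤ ldf C τ i ∧ ldf C τ i ≤ V) ∧
      ∑ j ∈ C, dist j (τ j) ≤ ∑ j ∈ C, dist j (σ j) + 2 * ((m : ℝ) - 1) * ∑ i ∈ O, ρ i := by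
  classical
  rcases hm.eq_or_lt with hm1 | hm2
  · subst hm1
    refine ⟨C.image σ, σ, ?_, fun j hj => Finset.mem_image_of_mem _ hj, ?_, by simp⟩
    · intro i hi
      obtain ⟨j, hj, rfl⟩ := Finset.mem_image.1 hi
      exact hσO j hj
    · intro i hi
      obtain ⟨j, hj, rfl⟩ := Finset.mem_image.1 hi
      exact ⟨Finset.card_pos.2 ⟨j, Finset.mem_filter.2 ⟨hj, rfl⟩⟩, hσV _ (hσO j hj)⟩
  have hm2r : (2 : ℝ) ≤ m := by exact_mod_cast hm2
  obtain ⟨B, hB⟩ : ∃ B : X → Finset X, ∀ i, B i = C.filter (fun j => dist i j ≤ ρ i) :=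
    ⟨_, fun _ => rfl⟩
  obtain ⟨T, hTO, hTd, hTcov⟩ := sel_lemma ρ (fun a b => ¬ Disjoint (B a) (B b))
    (fun a b h h' => h h'.symm) O
  have hTd' : ∀ a ∈ T, ∀ b ∈ T, a ≠ b → Disjoint (B a) (B b) :=
    fun a ha b hb hab => not_not.1 (hTd a ha b hb hab)
  -- step 1
  let P : ℕ → Prop := fun n => ∃ τ : X → X,
    (∀ j ∈ C, τ j = σ j ∨ (τ j ∈ T ∧ j ∈ B (τ j))) ∧ (∀ i ∈ T, m ≤ ldf C τ i) ∧
    (C.filter (fun j => τ j ≠ σ j)).card = n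
  have hP : ∃ n, P n := by
    refine ⟨_, fun j => if h : ∃ i ∈ T, j ∈ B i then h.choose else σ j, ?_, ?_, rfl⟩
    · intro j hj
      by_cases h : ∃ i ∈ T, j ∈ B i
      · right
        simp only [h, dif_pos]
        exact h.choose_spec
      · left
        simp only [h, dif_neg, not_false_eq_true]
    · intro i hi
      refine (hball i (hTO hi)).trans ?_
      apply Finset.card_le_card
      intro j hj
      rw [← hB] at hj
      have h : ∃ i ∈ T, j ∈ B i := ⟨i, hi, hj⟩
      rw [Finset.mem_filter]
      refine ⟨by rw [hB] at hj; exact (Finset.mem_filter.1 hj).1, ?_⟩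
      simp only [h, dif_pos]
      by_contra hne
      exact Finset.disjoint_left.1 (hTd' _ h.choose_spec.1 i hi hne) h.choose_spec.2 hj
  obtain ⟨τ, hτ1, hτm, hτn⟩ := Nat.find_spec hP
  have hτmin := fun n => Nat.find_min' hP (m := n)
  rw [← hτn] at hτmin
  clear hτn
  have hτO : ∀ j ∈ C, τ j ∈ O := by
    intro j hj
    rcases hτ1 j hj with h | h
    · rw [h]; exact hσO j hj
    · exact hTO h.1
  have hstolen : ∀ j ∈ C, τ j ≠ σ j → ldf C τ (τ j) ≤ m := by
    intro j hj hne
    by_contra hcon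
    push Not at hcon
    have hQ : ({j} : Finset X) ⊆ C.filter (fun k => τ k = τ j) := by
      intro k hk
      rw [Finset.mem_singleton] at hk
      subst hk
      simp [hj]
    have e1 := mvf_src C τ {j} (τ j) (σ j) hQ hne
    have e2 := mvf_dst C τ {j} (τ j) (σ j) hQ hne
    have e3 := fun i => mvf_oth C τ {j} (τ j) (σ j) i hQ
    have := hτmin _ ⟨mvf τ {j} (σ j), ?_, ?_, rfl⟩
    · refine absurd this (not_le.2 (Finset.card_lt_card (Finset.ssubset_iff_subset_ne.2 ⟨?_, ?_⟩)))
      · intro k hk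
        obtain ⟨hkC, hk⟩ := Finset.mem_filter.1 hk
        refine Finset.mem_filter.2 ⟨hkC, ?_⟩
        unfold mvf at hk
        split_ifs at hk with h
        · rw [Finset.mem_singleton] at h
          subst h
          exact absurd rfl hk
        · exact hk
      · intro heq
        have : j ∈ C.filter (fun k => mvf τ {j} (σ j) k ≠ σ k) := by
          rw [heq]; exact Finset.mem_filter.2 ⟨hj, hne⟩
        exact (Finset.mem_filter.1 this).2 (by simp [mvf])
    · intro k hk
      unfold mvf
      split_ifs with h
      · rw [Finset.mem_singleton] at h
        subst h
        exact Or.inl rfl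
      · exact hτ1 k hk
    · intro i hi
      have hi' := hτm i hi
      by_cases h1 : i = τ j
      · subst h1
        rw [Finset.card_singleton] at e1
        omega
      by_cases h2 : i = σ j
      · subst h2
        omega
      rw [e3 i h1 h2]
      exact hi'
  have hτV : ∀ i ∈ O, ldf C τ i ≤ V := by
    intro i hi
    by_cases h : ∃ j ∈ C, τ j = i ∧ τ j ≠ σ j
    · obtain ⟨j, hj, rfl, hne⟩ := h
      have := hstolen j hj hne
      omega
    · refine le_trans (Finset.card_le_card ?_) (hσV i hi)
      intro j hj
      obtain ⟨hjC, hji⟩ := Finset.mem_filter.1 hj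
      refine Finset.mem_filter.2 ⟨hjC, ?_⟩
      by_contra hne
      exact h ⟨j, hjC, hji, fun e => hne (e ▸ hji)⟩
  have hτc : ∑ j ∈ C, dist j (τ j) ≤
      ∑ j ∈ C, dist j (σ j) + 2 * ((m : ℝ) - 1) * ∑ i ∈ T, ρ i := by
    have h1 : ∑ j ∈ C, dist j (τ j) ≤ ∑ j ∈ C, dist j (σ j) +
        ∑ j ∈ C.filter (fun j => τ j ≠ σ j), ρ (τ j) := by
      rw [Finset.sum_filter, ← Finset.sum_add_distrib]
      apply Finset.sum_le_sum
      intro j hj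
      split_ifs with h
      · have h2 := ((hτ1 j hj).resolve_left h).2
        rw [hB] at h2
        have h3 := (Finset.mem_filter.1 h2).2
        rw [dist_comm] at h3
        have := dist_nonneg (x := j) (y := σ j)
        linarith
      · rw [not_not.1 h, add_zero]
    have hmap : ∀ j ∈ C.filter (fun j => τ j ≠ σ j), τ j ∈ T := by
      intro j hj
      obtain ⟨hjC, hne⟩ := Finset.mem_filter.1 hj
      exact ((hτ1 j hjC).resolve_left hne).1
    have h2 : ∑ j ∈ C.filter (fun j => τ j ≠ σ j), ρ (τ j) ≤ 2 * ((m : ℝ) - 1) * ∑ i ∈ T, ρ i := by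
      rw [← Finset.sum_fiberwise_of_maps_to hmap, Finset.mul_sum]
      apply Finset.sum_le_sum
      intro i hi
      rw [Finset.sum_congr rfl (g := fun _ => ρ i)
        (fun j hj => by rw [(Finset.mem_filter.1 hj).2]), Finset.sum_const, nsmul_eq_mul]
      apply mul_le_mul_of_nonneg_right _ (hρ i (hTO hi))
      have : ((C.filter (fun j => τ j ≠ σ j)).filter (fun j => τ j = i)).card ≤ m := by
        rcases ((C.filter (fun j => τ j ≠ σ j)).filter (fun j => τ j = i)).eq_empty_or_nonempty
          with h | ⟨j, hj⟩
        · rw [h]; simp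
        · obtain ⟨hj1, hj2⟩ := Finset.mem_filter.1 hj
          obtain ⟨hjC, hne⟩ := Finset.mem_filter.1 hj1
          have := hstolen j hjC hne
          rw [hj2] at this
          refine le_trans (Finset.card_le_card ?_) this
          exact Finset.filter_subset_filter _ (Finset.filter_subset _ _)
      have : (((C.filter (fun j => τ j ≠ σ j)).filter (fun j => τ j = i)).card : ℝ) ≤ m := by
        exact_mod_cast this
      linarith
    linarith
  -- step 2
  have step2 : ∀ S : Finset X, S ⊆ O \ T → ∃ τ' : X → X, (∀ j ∈ C, τ' j ∈ O) ∧
      (∀ i ∈ O, ldf C τ' i ≤ V) ∧ (∀ i ∈ T, m ≤ ldf C τ' i) ∧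
      (∀ i ∈ S, ldf C τ' i = 0 ∨ m ≤ ldf C τ' i) ∧
      ∑ j ∈ C, dist j (τ' j) ≤ ∑ j ∈ C, dist j (τ j) + 2 * ((m : ℝ) - 1) * ∑ i ∈ S, ρ i := by
    intro S
    induction S using Finset.induction_on with
    | empty => intro _; exact ⟨τ, hτO, hτV, hτm, by simp, by simp⟩
    | insert s S hsS ih =>
      intro hS
      obtain ⟨τ', a1, a2, a3, a4, a5⟩ := ih (fun i hi => hS (Finset.mem_insert_of_mem hi))
      obtain ⟨hsO, hsT⟩ := Finset.mem_sdiff.1 (hS (Finset.mem_insert_self s S))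
      rw [Finset.sum_insert hsS]
      have hρs := hρ s hsO
      by_cases hok : ldf C τ' s = 0 ∨ m ≤ ldf C τ' s
      · refine ⟨τ', a1, a2, a3, ?_, ?_⟩
        · intro i hi
          rcases Finset.mem_insert.1 hi with rfl | hi
          · exact hok
          · exact a4 i hi
        · have : 0 ≤ 2 * ((m : ℝ) - 1) * ρ s := mul_nonneg (by linarith) hρs
          linarith
      push Not at hok
      obtain ⟨hn0, hnm⟩ := hok
      obtain ⟨t, htT, hts, hconf⟩ := hTcov s hsO
      have hne : t ≠ s := fun e => hsT (e ▸ htT)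
      have hdist : dist s t ≤ 2 * ρ s := by
        obtain ⟨j, hj1, hj2⟩ := Finset.not_disjoint_iff.1 (hconf.resolve_left hne)
        rw [hB] at hj1 hj2
        have e1 := (Finset.mem_filter.1 hj1).2
        have e2 := (Finset.mem_filter.1 hj2).2
        have := dist_triangle_right s t j
        linarith
      have htm := a3 t htT
      have htS : t ∉ S := fun h =>
        (Finset.mem_sdiff.1 (hS (Finset.mem_insert_of_mem h))).2 htT
      by_cases hfit : ldf C τ' t + ldf C τ' s ≤ V
      · have hQ : C.filter (fun j => τ' j = s) ⊆ C.filter (fun j => τ' j = s) := le_rfl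
        have e1 := mvf_src C τ' _ s t hQ hne.symm
        have e2 := mvf_dst C τ' _ s t hQ hne.symm
        have e3 := fun i => mvf_oth C τ' _ s t i hQ
        have ec := mvf_cost C τ' _ s t hQ dist (2 * ρ s) (fun j _ => by
          linarith [dist_triangle j s t])
        have hQc : (C.filter (fun j => τ' j = s)).card = ldf C τ' s := rfl
        refine ⟨_, mvf_mem C O τ' (C.filter (fun j => τ' j = s)) t (hTO htT) a1, ?_, ?_, ?_, ?_⟩
        · intro i hi
          by_cases h1 : i = s
          · subst h1; omega
          by_cases h2 : i = t
          · subst h2; omega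
          rw [e3 i h1 h2]; exact a2 i hi
        · intro i hi
          by_cases h1 : i = s
          · subst h1; exact absurd hi hsT
          by_cases h2 : i = t
          · subst h2; omega
          rw [e3 i h1 h2]; exact a3 i hi
        · intro i hi
          by_cases h1 : i = s
          · subst h1; left; omega
          by_cases h2 : i = t
          · subst h2; right; omega
          rw [e3 i h1 h2]; exact a4 i ((Finset.mem_insert.1 hi).resolve_left h1)
        · have hc : ((C.filter (fun j => τ' j = s)).card : ℝ) ≤ (m : ℝ) - 1 := by
            have : (C.filter (fun j => τ' j = s)).card + 1 ≤ m := by omega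
            have : (((C.filter (fun j => τ' j = s)).card + 1 : ℕ) : ℝ) ≤ m := by exact_mod_cast this
            push_cast at this
            linarith
          have := mul_le_mul_of_nonneg_right hc (show 0 ≤ 2 * ρ s by linarith)
          linarith
      · obtain ⟨Q, hQ, hQc⟩ := Finset.exists_subset_card_eq
          (s := C.filter (fun j => τ' j = t)) (n := m - ldf C τ' s)
          (by change _ ≤ ldf C τ' t; omega)
        have e1 := mvf_src C τ' Q t s hQ hne
        have e2 := mvf_dst C τ' Q t s hQ hne
        have e3 := fun i => mvf_oth C τ' Q t s i hQ
        have ec := mvf_cost C τ' Q t s hQ dist (2 * ρ s) (fun j _ => by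
          linarith [dist_triangle_right j s t])
        refine ⟨_, mvf_mem C O τ' Q s hsO a1, ?_, ?_, ?_, ?_⟩
        · intro i hi
          have := a2 i hi
          by_cases h1 : i = s
          · subst h1; omega
          by_cases h2 : i = t
          · subst h2; omega
          rw [e3 i h2 h1]; exact a2 i hi
        · intro i hi
          by_cases h1 : i = s
          · subst h1; exact absurd hi hsT
          by_cases h2 : i = t
          · subst h2; omega
          rw [e3 i h2 h1]; exact a3 i hi
        · intro i hi
          by_cases h1 : i = s
          · subst h1; right; omega
          by_cases h2 : i = t
          · subst h2; right; omega
          rw [e3 i h2 h1]; exact a4 i ((Finset.mem_insert.1 hi).resolve_left h1)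
        · have hc : (Q.card : ℝ) ≤ (m : ℝ) - 1 := by
            have : Q.card + 1 ≤ m := by omega
            have : ((Q.card + 1 : ℕ) : ℝ) ≤ m := by exact_mod_cast this
            push_cast at this
            linarith
          have := mul_le_mul_of_nonneg_right hc (show 0 ≤ 2 * ρ s by linarith)
          linarith
  obtain ⟨τ', a1, a2, a3, a4, a5⟩ := step2 (O \ T) le_rfl
  refine ⟨C.image τ', τ', ?_, fun j hj => Finset.mem_image_of_mem _ hj, ?_, ?_⟩
  · intro i hi
    obtain ⟨j, hj, rfl⟩ := Finset.mem_image.1 hi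
    exact a1 j hj
  · intro i hi
    obtain ⟨j, hj, rfl⟩ := Finset.mem_image.1 hi
    refine ⟨?_, a2 _ (a1 j hj)⟩
    by_cases h : τ' j ∈ T
    · exact a3 _ h
    · refine (a4 _ (Finset.mem_sdiff.2 ⟨a1 j hj, h⟩)).resolve_left ?_
      have : 0 < ldf C τ' (τ' j) := Finset.card_pos.2 ⟨j, Finset.mem_filter.2 ⟨hj, rfl⟩⟩
      exact this.ne'
  · rw [← Finset.sum_sdiff hTO, mul_add]
    linarith

lemma radius_lemma {X : Type} [MetricSpace X] (C : Finset X) (L m : ℕ)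
    (hmL : m ≤ L) (hm : 1 ≤ m) (hCL : L ≤ C.card) (i : X) (xi : X → ℝ) (yi : ℝ) (hy : 0 ≤ yi)
    (hlb : (L : ℝ) * yi ≤ ∑ j ∈ C, xi j)
    (hx0 : ∀ j ∈ C, 0 ≤ xi j) (hxy : ∀ j ∈ C, xi j ≤ yi) :
    ∃ ρ : ℝ, 0 ≤ ρ ∧ m ≤ (C.filter (fun j => dist i j ≤ ρ)).card ∧
      ((L : ℝ) - m + 1) * (ρ * yi) ≤ ∑ j ∈ C, dist i j * xi j := by
  classical
  have hmr : (m : ℝ) ≤ L := by exact_mod_cast hmL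
  have hconn : 0 ≤ ∑ j ∈ C, dist i j * xi j :=
    Finset.sum_nonneg fun j hj => mul_nonneg dist_nonneg (hx0 j hj)
  rcases hy.eq_or_lt with h0 | h0
  · refine ⟨∑ j ∈ C, dist i j, Finset.sum_nonneg fun _ _ => dist_nonneg, ?_, ?_⟩
    · rw [Finset.filter_true_of_mem]
      · omega
      · intro j hj
        exact Finset.single_le_sum (f := fun j => dist i j) (fun _ _ => dist_nonneg) hj
    · rw [← h0]; simpa using hconn
  have hpos : 0 < ((L : ℝ) - m + 1) * yi := mul_pos (by linarith) h0
  refine ⟨(∑ j ∈ C, dist i j * xi j) / (((L : ℝ) - m + 1) * yi), div_nonneg hconn hpos.le, ?_, ?_⟩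
  swap
  · apply le_of_eq
    have : (L : ℝ) - m + 1 ≠ 0 := by linarith
    field_simp
  set ρ := (∑ j ∈ C, dist i j * xi j) / (((L : ℝ) - m + 1) * yi) with hρ
  have hρe : ρ * (((L : ℝ) - m + 1) * yi) = ∑ j ∈ C, dist i j * xi j := by
    rw [hρ]; exact div_mul_cancel₀ _ hpos.ne'
  have hρ0 : 0 ≤ ρ := div_nonneg hconn hpos.le
  by_contra hcon
  push Not at hcon
  have hs := Finset.sum_filter_add_sum_filter_not C (fun j => dist i j ≤ ρ) xi
  have hnear : ∑ j ∈ C.filter (fun j => dist i j ≤ ρ), xi j ≤ ((m : ℝ) - 1) * yi := by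
    calc _ ≤ ∑ j ∈ C.filter (fun j => dist i j ≤ ρ), yi :=
          Finset.sum_le_sum fun j hj => hxy j (Finset.mem_filter.1 hj).1
      _ = ((C.filter (fun j => dist i j ≤ ρ)).card : ℝ) * yi := by simp
      _ ≤ _ := by
          apply mul_le_mul_of_nonneg_right _ hy
          have : (((C.filter (fun j => dist i j ≤ ρ)).card + 1 : ℕ) : ℝ) ≤ m := by
            exact_mod_cast hcon
          push_cast at this
          linarith
  have hfar : ((L : ℝ) - m + 1) * yi ≤ ∑ j ∈ C.filter (fun j => ¬ dist i j ≤ ρ), xi j := by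
    linarith
  have h1 : ∑ j ∈ C.filter (fun j => ¬ dist i j ≤ ρ), ρ * xi j <
      ∑ j ∈ C.filter (fun j => ¬ dist i j ≤ ρ), dist i j * xi j := by
    apply Finset.sum_lt_sum
    · intro j hj
      obtain ⟨hjC, hj⟩ := Finset.mem_filter.1 hj
      exact mul_le_mul_of_nonneg_right (not_le.1 hj).le (hx0 j hjC)
    · by_contra hno
      have : ∑ j ∈ C.filter (fun j => ¬ dist i j ≤ ρ), xi j = 0 := by
        apply Finset.sum_eq_zero
        intro j hj'
        obtain ⟨hjC, hj⟩ := Finset.mem_filter.1 hj'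
        rcases (hx0 j hjC).eq_or_lt with h | h
        · exact h.symm
        · exact absurd (mul_lt_mul_of_pos_right (not_le.1 hj) h) (fun hh => hno ⟨j, hj', hh⟩)
      linarith
  have h2 : ∑ j ∈ C.filter (fun j => ¬ dist i j ≤ ρ), dist i j * xi j ≤
      ∑ j ∈ C, dist i j * xi j :=
    Finset.sum_le_sum_of_subset_of_nonneg (Finset.filter_subset _ _)
      (fun j hj _ => mul_nonneg dist_nonneg (hx0 j hj))
  rw [← Finset.mul_sum] at h1
  have h3 := mul_le_mul_of_nonneg_left hfar hρ0
  linarith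


/-- Tri-criteria rounding: from any feasible fractional LP solution of an
LBUBFL instance with uniform bounds one obtains an integral solution whose loads violate the
lower bound by factor `(1 - 1/ℓ)` and the upper bound by factor `(2 - 1/ℓ)`, of cost at most
`(10ℓ + 4)` times the LP cost. -/
theorem lbubfl_tricriteria
    (X : Type) [MetricSpace X] [DecidableEq X]
    (F C : Finset X) (f : X → ℝ) (L U : ℕ)
    (hf : ∀ i ∈ F, 0 ≤ f i) (hL : 0 < L) (hLU : L ≤ U)
    (ℓ : ℝ) (hℓ : 2 ≤ ℓ)
    (x : X → X → ℝ) (y : X → ℝ)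
    (hx1 : ∀ j ∈ C, 1 ≤ ∑ i ∈ F, x i j)
    (hlb : ∀ i ∈ F, (L : ℝ) * y i ≤ ∑ j ∈ C, x i j)
    (hub : ∀ i ∈ F, ∑ j ∈ C, x i j ≤ (U : ℝ) * y i)
    (hx0 : ∀ i ∈ F, ∀ j ∈ C, 0 ≤ x i j)
    (hxy : ∀ i ∈ F, ∀ j ∈ C, x i j ≤ y i)
    (hy1 : ∀ i ∈ F, y i ≤ 1) :
    ∃ (F' : Finset X) (σ : X → X), F' ⊆ F ∧ (∀ j ∈ C, σ j ∈ F') ∧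
      (∀ i ∈ F', (1 - 1 / ℓ) * (L : ℝ) ≤ ((C.filter (fun j => σ j = i)).card : ℝ) ∧
          ((C.filter (fun j => σ j = i)).card : ℝ) ≤ (2 - 1 / ℓ) * (U : ℝ)) ∧
      (∑ i ∈ F', f i) + (∑ j ∈ C, dist j (σ j)) ≤
        (10 * ℓ + 4) *
          ((∑ i ∈ F, f i * y i) + ∑ i ∈ F, ∑ j ∈ C, dist i j * x i j) := by
  classical
  have hLr : (1 : ℝ) ≤ L := by exact_mod_cast hL
  have hLUr : (L : ℝ) ≤ U := by exact_mod_cast hLU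
  have hU : 0 < U := by omega
  have hU' : (0 : ℝ) < U := by exact_mod_cast hU
  rcases C.eq_empty_or_nonempty with rfl | hCne
  · refine ⟨∅, id, by simp, by simp, by simp, ?_⟩
    simp only [Finset.sum_empty, Finset.sum_const_zero, add_zero]
    apply mul_nonneg (by linarith)
    apply Finset.sum_nonneg
    intro i hi
    have := hub i hi
    rw [Finset.sum_empty] at this
    exact mul_nonneg (hf i hi) (nonneg_of_mul_nonneg_right this hU')
  obtain ⟨j₀, hj₀⟩ := hCne
  have hy0 : ∀ i ∈ F, 0 ≤ y i := fun i hi => (hx0 i hi j₀ hj₀).trans (hxy i hi j₀ hj₀)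
  have hCL : L ≤ C.card := by
    have hex : ∃ i ∈ F, 0 < x i j₀ := by
      by_contra hno
      have : ∑ i ∈ F, x i j₀ ≤ 0 :=
        Finset.sum_nonpos fun i hi => not_lt.1 fun h => hno ⟨i, hi, h⟩
      linarith [hx1 j₀ hj₀]
    obtain ⟨i, hi, hpos⟩ := hex
    have hyp : 0 < y i := hpos.trans_le (hxy i hi j₀ hj₀)
    have h1 : (L : ℝ) * y i ≤ C.card * y i := by
      refine (hlb i hi).trans ((Finset.sum_le_sum (hxy i hi)).trans (le_of_eq ?_))
      simp
    have := le_of_mul_le_mul_right h1 hyp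
    exact_mod_cast this
  -- parameters
  obtain ⟨a, ha⟩ : ∃ a, a = 1 / ℓ := ⟨_, rfl⟩
  have hℓ0 : 0 < ℓ := by linarith
  have haℓ : a * ℓ = 1 := by rw [ha]; field_simp
  have ha0 : 0 < a := by rw [ha]; positivity
  have ha2 : a ≤ 1 / 2 := by nlinarith
  rw [← ha]
  obtain ⟨m, hm⟩ : ∃ m, m = ⌈(1 - a) * (L : ℝ)⌉₊ := ⟨_, rfl⟩
  obtain ⟨V, hV⟩ : ∃ V, V = ⌊(2 - a) * (U : ℝ)⌋₊ := ⟨_, rfl⟩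
  have hm1 : (1 - a) * (L : ℝ) ≤ m := by rw [hm]; exact Nat.le_ceil _
  have hposL : 0 < (1 - a) * (L : ℝ) := mul_pos (by linarith) (by linarith)
  have hm2 : (m : ℝ) < (1 - a) * L + 1 := by rw [hm]; exact Nat.ceil_lt_add_one hposL.le
  have hmpos : 1 ≤ m := by rw [hm]; exact Nat.ceil_pos.2 hposL
  have hmL : m ≤ L := by
    rw [hm]; apply Nat.ceil_le.2
    nlinarith
  have hVpos : 0 ≤ (2 - a) * (U : ℝ) := mul_nonneg (by linarith) hU'.le
  have hV1 : (V : ℝ) ≤ (2 - a) * U := by rw [hV]; exact Nat.floor_le hVpos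
  have hV2 : (2 - a) * (U : ℝ) < V + 1 := by rw [hV]; exact Nat.lt_floor_add_one _
  have hVU : V < 2 * U := by
    have : (V : ℝ) < 2 * U := by nlinarith
    exact_mod_cast this
  have hV3 : 3 * U ≤ 2 * (V + 1) := by
    have : 3 * (U : ℝ) ≤ 2 * (V + 1) := by nlinarith
    exact_mod_cast this
  have hVm : U + m < V + 2 := by
    have : (U : ℝ) + m < V + 2 := by nlinarith
    exact_mod_cast this
  have hmr : (m : ℝ) ≤ L := by exact_mod_cast hmL
  have hmr1 : (1 : ℝ) ≤ m := by exact_mod_cast hmpos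
  -- radii
  have hrad : ∀ i, ∃ ρ : ℝ, i ∈ F → 0 ≤ ρ ∧ m ≤ (C.filter (fun j => dist i j ≤ ρ)).card ∧
      ((L : ℝ) - m + 1) * (ρ * y i) ≤ ∑ j ∈ C, dist i j * x i j := by
    intro i
    by_cases hi : i ∈ F
    · obtain ⟨ρ, hρ⟩ := radius_lemma C L m hmL hmpos hCL i (x i) (y i) (hy0 i hi) (hlb i hi)
        (hx0 i hi) (hxy i hi)
      exact ⟨ρ, fun _ => hρ⟩
    · exact ⟨0, fun h => absurd h hi⟩
  choose ρ hρ using hrad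
  -- normalised solution
  have hS : ∀ j ∈ C, 0 < ∑ i ∈ F, x i j := fun j hj => by linarith [hx1 j hj]
  let x' : X → X → ℝ := fun i j => x i j / ∑ i ∈ F, x i j
  have hx'x : ∀ i ∈ F, ∀ j ∈ C, x' i j ≤ x i j := fun i hi j hj =>
    div_le_self (hx0 i hi j hj) (hx1 j hj)
  have hx'0 : ∀ i ∈ F, ∀ j ∈ C, 0 ≤ x' i j := fun i hi j hj =>
    div_nonneg (hx0 i hi j hj) (hS j hj).le
  have hx'1 : ∀ j ∈ C, ∑ i ∈ F, x' i j = 1 := by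
    intro j hj
    show ∑ i ∈ F, x i j / ∑ i ∈ F, x i j = 1
    rw [← Finset.sum_div]
    exact div_self (hS j hj).ne'
  obtain ⟨O, σ, hOF, hσO, hσV, hcost⟩ := cfl_lemma F C ⟨j₀, hj₀⟩
    (fun i => f i + 2 * ((m : ℝ) - 1) * ρ i) U V hU (by omega) hVU hV3
    (fun i hi => add_nonneg (hf i hi) (mul_nonneg (by linarith) (hρ i hi).1)) x' y hx'1
    (fun i hi => (Finset.sum_le_sum (hx'x i hi)).trans (hub i hi)) hx'0
    (fun i hi j hj => (hx'x i hi j hj).trans (hxy i hi j hj)) hy1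
  obtain ⟨O', τ, hO'O, hτO', hτ, hτc⟩ := fix_lemma O C m V hmpos (by omega) ρ
    (fun i hi => (hρ i (hOF hi)).1) (fun i hi => (hρ i (hOF hi)).2.1) σ hσO hσV
  refine ⟨O', τ, hO'O.trans hOF, hτO', ?_, ?_⟩
  · intro i hi
    obtain ⟨h1, h2⟩ := hτ i hi
    unfold ldf at h1 h2
    have h1 : (m : ℝ) ≤ ((C.filter (fun j => τ j = i)).card : ℝ) := by exact_mod_cast h1
    have h2 : ((C.filter (fun j => τ j = i)).card : ℝ) ≤ V := by exact_mod_cast h2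
    exact ⟨hm1.trans h1, h2.trans hV1⟩
  have c1 : ∑ i ∈ O', f i ≤ ∑ i ∈ O, f i :=
    Finset.sum_le_sum_of_subset_of_nonneg hO'O fun i hi _ => hf i (hOF hi)
  have c2 : ∑ i ∈ O, (f i + 2 * ((m : ℝ) - 1) * ρ i) =
      ∑ i ∈ O, f i + 2 * ((m : ℝ) - 1) * ∑ i ∈ O, ρ i := by
    rw [Finset.sum_add_distrib, Finset.mul_sum]
  have c3 : ∑ i ∈ F, ∑ j ∈ C, dist i j * x' i j ≤ ∑ i ∈ F, ∑ j ∈ C, dist i j * x i j :=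
    Finset.sum_le_sum fun i hi => Finset.sum_le_sum fun j hj =>
      mul_le_mul_of_nonneg_left (hx'x i hi j hj) dist_nonneg
  have c4 : ∑ i ∈ F, (f i + 2 * ((m : ℝ) - 1) * ρ i) * y i ≤
      ∑ i ∈ F, f i * y i + 2 * (ℓ - 1) * ∑ i ∈ F, ∑ j ∈ C, dist i j * x i j := by
    rw [Finset.mul_sum, ← Finset.sum_add_distrib]
    apply Finset.sum_le_sum
    intro i hi
    obtain ⟨r0, -, r1⟩ := hρ i hi
    have e1 : (m : ℝ) - 1 ≤ (ℓ - 1) * ((L : ℝ) - m + 1) := by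
      have : ℓ * ((m : ℝ) - 1) ≤ ℓ * ((1 - a) * L) :=
        mul_le_mul_of_nonneg_left (by linarith) hℓ0.le
      have e : ℓ * ((1 - a) * L) = (ℓ - 1) * L := by linear_combination (-(L : ℝ)) * haℓ
      linarith
    have e2 := mul_le_mul_of_nonneg_right e1 (mul_nonneg r0 (hy0 i hi))
    have e3 := mul_le_mul_of_nonneg_left r1 (show 0 ≤ ℓ - 1 by linarith)
    linarith
  have p1 : 0 ≤ ∑ i ∈ F, f i * y i :=
    Finset.sum_nonneg fun i hi => mul_nonneg (hf i hi) (hy0 i hi)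
  have p2 : 0 ≤ ∑ i ∈ F, ∑ j ∈ C, dist i j * x i j :=
    Finset.sum_nonneg fun i hi => Finset.sum_nonneg fun j hj =>
      mul_nonneg dist_nonneg (hx0 i hi j hj)
  generalize ∑ i ∈ F, ∑ j ∈ C, dist i j * x i j = W at *
  generalize ∑ i ∈ F, f i * y i = G at *
  have q1 : 0 ≤ ℓ * G := mul_nonneg hℓ0.le p1
  have q2 : 0 ≤ (ℓ - 2) * W := mul_nonneg (by linarith) p2
  rw [c2] at hcost
  linarith
end

section
/- Let X be a metric space, C ⊆ X a finite set, r : C → ℝ with r j ≥ 0 for all j ∈ C, and t > 0 a real number. Then there exists a subset C' ⊆ C such that: (i) for every j ∈ C there is some j' ∈ C' with dist(j, j') ≤ t·r j and r j' ≤ r j; and (ii) for all distinct j', k' ∈ C', dist(j', k') > t·max(r j', r k'). -/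
/-- Greedy filtering: given a finite set `C` of points with nonnegative radii
`r` and a parameter `t > 0`, there is a subset `C' ⊆ C` such that every point of `C` is within
distance `t·r j` of a selected point with no larger radius, and selected points satisfy the
separation property `dist(j', k') > t·max(r j', r k')`. -/
theorem greedy_filtering
    (X : Type) [MetricSpace X]
    (C : Finset X) (r : X → ℝ) (hr : ∀ j ∈ C, 0 ≤ r j)
    (t : ℝ) (ht : 0 < t) :
    ∃ C' : Finset X, C' ⊆ C ∧
      (∀ j ∈ C, ∃ j' ∈ C', dist j j' ≤ t * r j ∧ r j' ≤ r j) ∧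
      (∀ j' ∈ C', ∀ k' ∈ C', j' ≠ k' → t * max (r j') (r k') < dist j' k') := by
  classical
  induction C using Finset.induction_on_max_value r with
  | empty => exact ⟨∅, by simp⟩
  | insert a s has hmax ih =>
    obtain ⟨D, hD, h1, h2⟩ := ih (fun j hj => hr j (Finset.mem_insert_of_mem hj))
    have ha : 0 ≤ r a := hr a (Finset.mem_insert_self a s)
    by_cases h : ∃ j' ∈ D, dist a j' ≤ t * r a
    · obtain ⟨b, hb, hab⟩ := h
      refine ⟨D, hD.trans (Finset.subset_insert a s), ?_, h2⟩
      intro j hj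
      rcases Finset.mem_insert.1 hj with rfl | hj
      · exact ⟨b, hb, hab, hmax b (hD hb)⟩
      · exact h1 j hj
    · push Not at h
      refine ⟨insert a D, Finset.insert_subset_insert a hD, ?_, ?_⟩
      · intro j hj
        rcases Finset.mem_insert.1 hj with rfl | hj
        · exact ⟨j, Finset.mem_insert_self _ _, by rw [dist_self]; positivity, le_rfl⟩
        · obtain ⟨b, hb, hh⟩ := h1 j hj
          exact ⟨b, Finset.mem_insert_of_mem hb, hh⟩
      · intro j hj k hk hne
        rcases Finset.mem_insert.1 hj with rfl | hj2
        · rcases Finset.mem_insert.1 hk with rfl | hk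
          · exact absurd rfl hne
          · rw [max_eq_left (hmax k (hD hk))]
            exact h k hk
        · rcases Finset.mem_insert.1 hk with rfl | hk
          · rw [max_eq_right (hmax j (hD hj2)), dist_comm]
            exact h j hj2
          · exact h2 j hj2 k hk hne
end

section
/- Let X be a metric space, ℓ > 0 real, C' ⊆ X a finite set with radii r : C' → ℝ, r ≥ 0, satisfying the separation property: dist(a, b) > 2ℓ·max(r a, r b) for all distinct a, b ∈ C'. Let j ∈ X with radius r_j ≥ 0, and suppose there exists k' ∈ C' with dist(j, k') ≤ 2ℓ·r_j and r k' ≤ r_j. Let j' ∈ C' satisfy dist(j, j') ≤ ℓ·(r j'). Then r j' ≤ 2·r_j. -/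
/-- Under the separation property of the cluster centers `C'` and the covering
property of client `j`, if the center `j'` satisfies `dist(j, j') ≤ ℓ·r j'`, then
`r j' ≤ 2·r j`. -/
theorem center_radius_bound
    (X : Type) [MetricSpace X]
    (ℓ : ℝ) (hℓ : 0 < ℓ)
    (C' : Finset X) (r : X → ℝ) (hr : ∀ a ∈ C', 0 ≤ r a)
    (hsep : ∀ a ∈ C', ∀ b ∈ C', a ≠ b → 2 * ℓ * max (r a) (r b) < dist a b)
    (j : X) (rj : ℝ) (hrj : 0 ≤ rj)
    (hcov : ∃ k' ∈ C', dist j k' ≤ 2 * ℓ * rj ∧ r k' ≤ rj)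
    (j' : X) (hj' : j' ∈ C')
    (hclose : dist j j' ≤ ℓ * r j') :
    r j' ≤ 2 * rj := by
  obtain ⟨k, hk, hd, hrk⟩ := hcov
  by_cases h : j' = k
  · subst h
    linarith
  · have h1 := hsep j' hj' k hk h
    have h2 := dist_triangle_left j' k j
    have h3 : 2 * ℓ * r j' ≤ 2 * ℓ * max (r j') (r k) :=
      mul_le_mul_of_nonneg_left (le_max_left _ _) (by positivity)
    have h4 : ℓ * r j' ≤ ℓ * (2 * rj) := by linarith
    exact le_of_mul_le_mul_left h4 hℓ
end

section
/- Let X be a metric space, ℓ > 0 real, C' ⊆ X a finite set with radii r : C' → ℝ, r ≥ 0, satisfying the separation property: dist(a, b) > 2ℓ·max(r a, r b) for all distinct a, b ∈ C'. Let j ∈ X with radius r_j ≥ 0, and suppose there exists k' ∈ C' with dist(j, k') ≤ 2ℓ·r_j and r k' ≤ r_j. Let j' ∈ C', let i ∈ X satisfy dist(i, j') ≤ dist(i, k'') for every k'' ∈ C', and let i₀ ∈ X satisfy dist(i₀, j') ≤ ℓ·(r j'). Then dist(i₀, j) ≤ 4·(dist(i, j) + ℓ·r_j). -/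
/-- Under the separation property of the cluster centers `C'` and the covering
property of client `j`, if `i` lies in the cluster of `j'` (i.e. `j'` is a nearest center to
`i`) and `i₀` lies in the ball of radius `ℓ·r j'` around `j'`, then
`dist(i₀, j) ≤ 4·(dist(i, j) + ℓ·r j)`. -/
theorem sparse_reassignment_bound
    (X : Type) [MetricSpace X]
    (ℓ : ℝ) (hℓ : 0 < ℓ)
    (C' : Finset X) (r : X → ℝ) (hr : ∀ a ∈ C', 0 ≤ r a)
    (hsep : ∀ a ∈ C', ∀ b ∈ C', a ≠ b → 2 * ℓ * max (r a) (r b) < dist a b)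
    (j : X) (rj : ℝ) (hrj : 0 ≤ rj)
    (hcov : ∃ k' ∈ C', dist j k' ≤ 2 * ℓ * rj ∧ r k' ≤ rj)
    (j' : X) (hj' : j' ∈ C')
    (i : X) (hi : ∀ k'' ∈ C', dist i j' ≤ dist i k'')
    (i₀ : X) (hi₀ : dist i₀ j' ≤ ℓ * r j') :
    dist i₀ j ≤ 4 * (dist i j + ℓ * rj) := by
  obtain ⟨k, hk, hjk, hrk⟩ := hcov
  have hd : 0 ≤ dist i j := dist_nonneg
  have hR : 0 ≤ ℓ * rj := by positivity
  by_cases h : j' = k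
  · subst h
    have h1 := dist_triangle_right i₀ j j'
    have h2 : ℓ * r j' ≤ ℓ * rj := by gcongr
    linarith
  · have h1 := hsep j' hj' k hk h
    have h2 : 2 * ℓ * r j' ≤ 2 * ℓ * max (r j') (r k) := by
      gcongr
      exact le_max_left _ _
    have h3 := dist_triangle_left j' k i
    have h4 := dist_triangle i j k
    have h5 := hi k hk
    have h6 := dist_triangle_right i₀ j j'
    have h7 := dist_triangle_left j j' i
    linarith
end

section
/- Let an LBUBFL instance with uniform bounds be given together with a feasible fractional LP solution (x*, y*) and a real parameter ℓ ≥ 2. Let C' ⊆ C with radii Ĉ (where Ĉ_j = Σ_{i∈F} dist(i,j)·x* i j) satisfy the separation property (dist(j',k') > 2ℓ·max(Ĉ_{j'}, Ĉ_{k'}) for distinct j',k' ∈ C') and the covering property (every j ∈ C has some k' ∈ C' with dist(j,k') ≤ 2ℓ·Ĉ_j and Ĉ_{k'} ≤ Ĉ_j). For j' ∈ C' let N_{j'} = { i ∈ F : dist(i,j') ≤ dist(i,k') for all k' ∈ C' }, and assume the sets N_{j'} partition F. For j ∈ C, j' ∈ C' define φ(j,j') = Σ_{i ∈ N_{j'}}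 x* i j and d_{j'} = Σ_{j∈C} φ(j,j'); call j' sparse if d_{j'} ≤ U and dense otherwise; let C_S and C_D be the sets of sparse and dense centers. Then there exist x̂ : F → C → ℝ with x̂ ≥ 0 and ŷ : F → ℝ such that: for every sparse j' there is a facility i(j') ∈ N_{j'} with dist(i(j'), j') ≤ ℓ·Ĉ_{j'}, ŷ_{i(j')} = 1, ŷ_i = 0 and x̂ i j = 0 for all other i ∈ N_{j'} and all j ∈ C, and Σ_{j∈C} x̂ (i(j')) j = d_{j'} ≥ (1 − 1/ℓ)·L; for every dense j' and i ∈ N_{j'}, ŷ_i = y*_i and x̂ i j = x* i j for all j; and Σ_{i∈F} [f_i·ŷ_i + Σ_{j∈C} x̂ i j · dist(i,j)] ≤ Σ_{j'∈C_S} [ (ℓ/(ℓ−1))·Σ_{i∈N_{j'}} f_i·y*_i + 4·Σ_{i∈N_{j'}} Σ_{j∈C} x* i j ·(dist(i,j) + ℓ·Ĉ_j) ] + Σ_{j'∈C_D} Σ_{i∈N_{j'}} [ f_i·y*_i + Σ_{j∈C} x* i j · dist(i,j) ]. -/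
open Finset

/-- The cluster of facilities of `F` whose nearest center in `C'` is `j'`. -/
noncomputable def cluster {X : Type} [MetricSpace X] (F C' : Finset X) (j' : X) : Finset X :=
  F.filter (fun i => ∀ k' ∈ C', dist i j' ≤ dist i k')

/-- Total (fractional) demand `d_{j'}` served inside the cluster of `j'`. -/
noncomputable def clusterDemand {X : Type} [MetricSpace X]
    (F C C' : Finset X) (x : X → X → ℝ) (j' : X) : ℝ :=
  ∑ j ∈ C, ∑ i ∈ cluster F C' j', x i j

theorem scr_center {X : Type} [MetricSpace X]
    (F C : Finset X) (f : X → ℝ) (L U : ℕ)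
    (hf : ∀ i ∈ F, 0 ≤ f i) (hL : 0 < L) (hLU : L ≤ U)
    (x : X → X → ℝ) (y : X → ℝ)
    (hx1 : ∀ j ∈ C, 1 ≤ ∑ i ∈ F, x i j)
    (hlb : ∀ i ∈ F, (L : ℝ) * y i ≤ ∑ j ∈ C, x i j)
    (hx0 : ∀ i ∈ F, ∀ j ∈ C, 0 ≤ x i j)
    (hxy : ∀ i ∈ F, ∀ j ∈ C, x i j ≤ y i)
    (ℓ : ℝ) (hℓ : 2 ≤ ℓ)
    (C' : Finset X) (hC'sub : C' ⊆ C) (R : X → ℝ)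
    (hR : ∀ j, ∑ i ∈ F, dist i j * x i j = R j)
    (hsep : ∀ j' ∈ C', ∀ k' ∈ C', j' ≠ k' → 2 * ℓ * max (R j') (R k') < dist j' k')
    (j' : X) (hj' : j' ∈ C') :
    ∃ i₀ ∈ cluster F C' j', dist i₀ j' ≤ ℓ * R j' ∧
      f i₀ ≤ (ℓ / (ℓ - 1)) * ∑ i ∈ cluster F C' j', f i * y i ∧
      (1 - 1 / ℓ) * (L : ℝ) ≤ clusterDemand F C C' x j' := by
  have hjC := hC'sub hj'
  have hℓ0 : (0:ℝ) < ℓ := by linarith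
  have hy0 : ∀ i ∈ F, 0 ≤ y i := fun i hi => (hx0 i hi j' hjC).trans (hxy i hi j' hjC)
  have hR0 : 0 ≤ R j' := by
    rw [← hR]
    exact sum_nonneg fun i hi => mul_nonneg dist_nonneg (hx0 i hi j' hjC)
  set B := F.filter (fun i => dist i j' ≤ ℓ * R j') with hB
  have hBN : B ⊆ cluster F C' j' := by
    intro i hi
    rw [hB, mem_filter] at hi
    rw [cluster, mem_filter]
    refine ⟨hi.1, fun k' hk' => ?_⟩
    by_cases hjk : j' = k'
    · rw [hjk]
    have h1 := hsep j' hj' k' hk' hjk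
    have h2 : 2 * ℓ * R j' ≤ 2 * ℓ * max (R j') (R k') :=
      mul_le_mul_of_nonneg_left (le_max_left _ _) (by linarith)
    have h3 := dist_triangle_left j' k' i
    linarith [hi.2]
  have hNF : cluster F C' j' ⊆ F := filter_subset _ _
  have hBF : B ⊆ F := filter_subset _ _
  have hout : ∑ i ∈ F.filter (fun i => ¬ dist i j' ≤ ℓ * R j'), x i j' ≤ 1 / ℓ := by
    have hle : ∑ i ∈ F.filter (fun i => ¬ dist i j' ≤ ℓ * R j'), dist i j' * x i j' ≤ R j' := by
      rw [← hR j']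
      exact sum_le_sum_of_subset_of_nonneg (filter_subset _ _)
        fun i hi _ => mul_nonneg dist_nonneg (hx0 i hi j' hjC)
    rcases hR0.eq_or_lt with h0 | hpos
    · have hz : ∀ i ∈ F.filter (fun i => ¬ dist i j' ≤ ℓ * R j'), x i j' = 0 := by
        intro i hi
        have hall := (sum_eq_zero_iff_of_nonneg (s := F) (f := fun i => dist i j' * x i j')
          (fun i hi => mul_nonneg dist_nonneg (hx0 i hi j' hjC))).1 (by rw [hR]; exact h0.symm)
        rw [mem_filter, ← h0] at hi
        have := hall i hi.1
        rcases mul_eq_zero.1 this with h | h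
        · exact absurd (by rw [h]; simp) hi.2
        · exact h
      rw [sum_eq_zero hz]; positivity
    · have : ℓ * R j' * ∑ i ∈ F.filter (fun i => ¬ dist i j' ≤ ℓ * R j'), x i j' ≤ R j' := by
        refine le_trans ?_ hle
        rw [mul_sum]
        refine sum_le_sum fun i hi => ?_
        rw [mem_filter] at hi
        exact mul_le_mul_of_nonneg_right (not_le.1 hi.2).le (hx0 i hi.1 j' hjC)
      rw [le_div_iff₀ hℓ0]
      nlinarith
  have hsplit := sum_filter_add_sum_filter_not F (fun i => dist i j' ≤ ℓ * R j') (fun i => x i j')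
  have hBx : 1 - 1 / ℓ ≤ ∑ i ∈ B, x i j' := by
    have := hx1 j' hjC
    linarith
  have hBy : 1 - 1 / ℓ ≤ ∑ i ∈ B, y i :=
    hBx.trans (sum_le_sum fun i hi => hxy i (hBF hi) j' hjC)
  have hp : 0 < 1 - 1 / ℓ := by
    rw [sub_pos, div_lt_one hℓ0]; linarith
  have hBne : B.Nonempty := by
    by_contra h
    rw [not_nonempty_iff_eq_empty] at h
    rw [h, sum_empty] at hBy
    linarith
  obtain ⟨i₀, hi₀, hmin⟩ := exists_min_image B f hBne
  refine ⟨i₀, hBN hi₀, (mem_filter.1 hi₀).2, ?_, ?_⟩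
  · have h1 : f i₀ * ∑ i ∈ B, y i ≤ ∑ i ∈ B, f i * y i := by
      rw [mul_sum]
      exact sum_le_sum fun i hi => mul_le_mul_of_nonneg_right (hmin i hi) (hy0 i (hBF hi))
    have h2 : ∑ i ∈ B, f i * y i ≤ ∑ i ∈ cluster F C' j', f i * y i :=
      sum_le_sum_of_subset_of_nonneg hBN
        fun i hi _ => mul_nonneg (hf i (hNF hi)) (hy0 i (hNF hi))
    have h3 : f i₀ * (1 - 1 / ℓ) ≤ ∑ i ∈ cluster F C' j', f i * y i :=
      (mul_le_mul_of_nonneg_left hBy (hf i₀ (hBF hi₀))).trans (h1.trans h2)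
    have h4 : f i₀ = (ℓ / (ℓ - 1)) * (f i₀ * (1 - 1 / ℓ)) := by
      have : ℓ - 1 ≠ 0 := by linarith
      field_simp
    rw [h4]
    exact mul_le_mul_of_nonneg_left h3 (div_nonneg hℓ0.le (by linarith))
  · have h2 : ∑ i ∈ B, y i ≤ ∑ i ∈ cluster F C' j', y i :=
      sum_le_sum_of_subset_of_nonneg hBN fun i hi _ => hy0 i (hNF hi)
    rw [clusterDemand, sum_comm]
    calc (1 - 1 / ℓ) * (L : ℝ) ≤ (∑ i ∈ cluster F C' j', y i) * L :=
          mul_le_mul_of_nonneg_right (hBy.trans h2) (Nat.cast_nonneg L)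
      _ = ∑ i ∈ cluster F C' j', (L : ℝ) * y i := by rw [mul_comm, mul_sum]
      _ ≤ _ := sum_le_sum fun i hi => hlb i (hNF hi)

theorem scr_dist {X : Type} [MetricSpace X]
    (F C : Finset X) (ℓ : ℝ) (hℓ : 2 ≤ ℓ)
    (C' : Finset X) (R : X → ℝ)
    (hR0 : ∀ j ∈ C, 0 ≤ R j)
    (hsep : ∀ j' ∈ C', ∀ k' ∈ C', j' ≠ k' → 2 * ℓ * max (R j') (R k') < dist j' k')
    (hcov : ∀ j ∈ C, ∃ k' ∈ C', dist j k' ≤ 2 * ℓ * R j ∧ R k' ≤ R j)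
    (j' : X) (hj' : j' ∈ C') (i₀ i j : X) (hi : i ∈ cluster F C' j') (hj : j ∈ C)
    (h0 : dist i₀ j' ≤ ℓ * R j') :
    dist i₀ j ≤ 4 * (dist i j + ℓ * R j) := by
  obtain ⟨k', hk', hd, hr⟩ := hcov j hj
  have hik := (mem_filter.1 hi).2 k' hk'
  have t1 := dist_triangle i j k'
  have t2 := dist_triangle i₀ j' j
  have t3 := dist_triangle_left j' j i
  have hRj : 0 ≤ ℓ * R j := mul_nonneg (by linarith) (hR0 j hj)
  have hdn : 0 ≤ dist i j := dist_nonneg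
  by_cases h : j' = k'
  · subst h
    have : ℓ * R j' ≤ ℓ * R j := mul_le_mul_of_nonneg_left hr (by linarith)
    linarith
  · have h1 := hsep j' hj' k' hk' h
    have h2 : 2 * ℓ * R j' ≤ 2 * ℓ * max (R j') (R k') :=
      mul_le_mul_of_nonneg_left (le_max_left _ _) (by linarith)
    have t4 := dist_triangle_left j' k' i
    linarith

/-- Opening one facility integrally in each sparse cluster: from the feasible
fractional LP solution `(x*, y*)` of an LBUBFL instance with uniform bounds one obtains a
solution `(xhat, yhat)` in which every sparse cluster has exactly one (integrally) opened facility
`i(j')` within distance `ℓ·Ĉ_{j'}` of its center carrying the whole demand `d_{j'} ≥ (1-1/ℓ)·L`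
of the cluster, dense clusters are untouched, and the stated cost bound holds. -/
theorem sparse_clusters_rounding
    (X : Type) [MetricSpace X]
    (F C : Finset X) (f : X → ℝ) (L U : ℕ)
    (hf : ∀ i ∈ F, 0 ≤ f i) (hL : 0 < L) (hLU : L ≤ U)
    (x : X → X → ℝ) (y : X → ℝ)
    (hx1 : ∀ j ∈ C, 1 ≤ ∑ i ∈ F, x i j)
    (hlb : ∀ i ∈ F, (L : ℝ) * y i ≤ ∑ j ∈ C, x i j)
    (hub : ∀ i ∈ F, ∑ j ∈ C, x i j ≤ (U : ℝ) * y i)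
    (hx0 : ∀ i ∈ F, ∀ j ∈ C, 0 ≤ x i j)
    (hxy : ∀ i ∈ F, ∀ j ∈ C, x i j ≤ y i)
    (hy1 : ∀ i ∈ F, y i ≤ 1)
    (ℓ : ℝ) (hℓ : 2 ≤ ℓ)
    (C' : Finset X) (hC'sub : C' ⊆ C)
    (hsep : ∀ j' ∈ C', ∀ k' ∈ C', j' ≠ k' →
      2 * ℓ * max (∑ i ∈ F, dist i j' * x i j') (∑ i ∈ F, dist i k' * x i k') < dist j' k')
    (hcov : ∀ j ∈ C, ∃ k' ∈ C',
      dist j k' ≤ 2 * ℓ * ∑ i ∈ F, dist i j * x i j ∧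
      (∑ i ∈ F, dist i k' * x i k') ≤ ∑ i ∈ F, dist i j * x i j)
    (hpart : ∀ i ∈ F, ∃! j' : X, j' ∈ C' ∧ i ∈ cluster F C' j') :
    ∃ (xhat : X → X → ℝ) (yhat : X → ℝ),
      (∀ i j : X, 0 ≤ xhat i j) ∧
      (∀ j' ∈ C'.filter (fun j' => clusterDemand F C C' x j' ≤ (U : ℝ)),
        ∃ i₀ ∈ cluster F C' j',
          dist i₀ j' ≤ ℓ * ∑ i ∈ F, dist i j' * x i j' ∧
          yhat i₀ = 1 ∧
          (∀ i ∈ cluster F C' j', i ≠ i₀ → yhat i = 0 ∧ ∀ j ∈ C, xhat i j = 0) ∧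
          (∑ j ∈ C, xhat i₀ j = clusterDemand F C C' x j') ∧
          (1 - 1 / ℓ) * (L : ℝ) ≤ clusterDemand F C C' x j') ∧
      (∀ j' ∈ C'.filter (fun j' => ¬ clusterDemand F C C' x j' ≤ (U : ℝ)),
        ∀ i ∈ cluster F C' j', yhat i = y i ∧ ∀ j ∈ C, xhat i j = x i j) ∧
      (∑ i ∈ F, (f i * yhat i + ∑ j ∈ C, xhat i j * dist i j) ≤
        (∑ j' ∈ C'.filter (fun j' => clusterDemand F C C' x j' ≤ (U : ℝ)),
          ((ℓ / (ℓ - 1)) * ∑ i ∈ cluster F C' j', f i * y i +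
            4 * ∑ i ∈ cluster F C' j', ∑ j ∈ C,
              x i j * (dist i j + ℓ * ∑ i' ∈ F, dist i' j * x i' j))) +
        ∑ j' ∈ C'.filter (fun j' => ¬ clusterDemand F C C' x j' ≤ (U : ℝ)),
          ∑ i ∈ cluster F C' j', (f i * y i + ∑ j ∈ C, x i j * dist i j)) := by
  classical
  obtain ⟨R, hR⟩ : ∃ R : X → ℝ, ∀ j, ∑ i ∈ F, dist i j * x i j = R j := ⟨_, fun _ => rfl⟩
  simp only [hR] at hsep hcov ⊢
  have hR0 : ∀ j ∈ C, 0 ≤ R j := fun j hj => by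
    rw [← hR]
    exact sum_nonneg fun i hi => mul_nonneg dist_nonneg (hx0 i hi j hj)
  have hcen := scr_center F C f L U hf hL hLU x y hx1 hlb hx0 hxy ℓ hℓ C' hC'sub R hR hsep
  choose! g hgN hgd hgf hgL using hcen
  choose! c hc hcu using hpart
  have hNF : ∀ j', cluster F C' j' ⊆ F := fun j' => filter_subset _ _
  have hcN : ∀ j' ∈ C', ∀ i ∈ cluster F C' j', c i = j' := fun j' hj' i hi =>
    (hcu i (hNF j' hi) j' ⟨hj', hi⟩).symm
  have hcl : ∀ j' ∈ C', F.filter (fun i => c i = j') = cluster F C' j' := by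
    intro j' hj'
    ext i
    rw [mem_filter]
    constructor
    · rintro ⟨hi, rfl⟩; exact (hc i hi).2
    · intro hi; exact ⟨hNF _ hi, hcN j' hj' i hi⟩
  let xh : X → X → ℝ := fun i j => if i ∈ F ∧ j ∈ C then
    (if clusterDemand F C C' x (c i) ≤ (U : ℝ) then
      (if i = g (c i) then ∑ i' ∈ cluster F C' (c i), x i' j else 0) else x i j) else 0
  let yh : X → ℝ := fun i => if clusterDemand F C C' x (c i) ≤ (U : ℝ) then
      (if i = g (c i) then 1 else 0) else y i
  have xg : ∀ j' ∈ C', clusterDemand F C C' x j' ≤ (U : ℝ) → ∀ j ∈ C,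
      xh (g j') j = ∑ i' ∈ cluster F C' j', x i' j := by
    intro j' hj' hs j hj
    simp [xh, hNF j' (hgN j' hj'), hj, hcN j' hj' _ (hgN j' hj'), hs]
  have yg : ∀ j' ∈ C', clusterDemand F C C' x j' ≤ (U : ℝ) → yh (g j') = 1 := by
    intro j' hj' hs
    simp [yh, hcN j' hj' _ (hgN j' hj'), hs]
  have xo : ∀ j' ∈ C', clusterDemand F C C' x j' ≤ (U : ℝ) → ∀ i ∈ cluster F C' j', i ≠ g j' →
      yh i = 0 ∧ ∀ j ∈ C, xh i j = 0 := by
    intro j' hj' hs i hi hne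
    simp [yh, xh, hcN j' hj' _ hi, hs, hne]
  have xd : ∀ j' ∈ C', ¬ clusterDemand F C C' x j' ≤ (U : ℝ) → ∀ i ∈ cluster F C' j',
      yh i = y i ∧ ∀ j ∈ C, xh i j = x i j := by
    intro j' hj' hs i hi
    refine ⟨by simp only [yh, hcN j' hj' _ hi, if_neg hs], fun j hj => ?_⟩
    simp only [xh, hcN j' hj' _ hi, if_neg hs, if_pos (And.intro (hNF _ hi) hj)]
  refine ⟨xh, yh, ?_, ?_, ?_, ?_⟩
  · intro i j
    simp only [xh]
    split_ifs with h1 h2 h3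
    · exact sum_nonneg fun i' hi' => hx0 i' (hNF _ hi') j h1.2
    · exact le_rfl
    · exact hx0 i h1.1 j h1.2
    · exact le_rfl
  · intro j' hj'
    obtain ⟨hj, hs⟩ := mem_filter.1 hj'
    refine ⟨g j', hgN j' hj, hgd j' hj, yg j' hj hs, xo j' hj hs, ?_, hgL j' hj⟩
    exact sum_congr rfl fun j hjC => xg j' hj hs j hjC
  · intro j' hj'
    obtain ⟨hj, hs⟩ := mem_filter.1 hj'
    exact xd j' hj hs
  · rw [← sum_fiberwise_of_maps_to (fun i hi => (hc i hi).1)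
      (fun i => f i * yh i + ∑ j ∈ C, xh i j * dist i j),
      ← sum_filter_add_sum_filter_not C' (fun j' => clusterDemand F C C' x j' ≤ (U : ℝ))]
    refine add_le_add (sum_le_sum fun j' hj' => ?_) (sum_le_sum fun j' hj' => ?_)
    · obtain ⟨hj, hs⟩ := mem_filter.1 hj'
      rw [hcl j' hj, sum_eq_single_of_mem (g j') (hgN j' hj)]
      · rw [yg j' hj hs, mul_one]
        refine add_le_add (hgf j' hj) ?_
        rw [sum_comm, mul_sum]
        refine sum_le_sum fun j hjC => ?_
        rw [xg j' hj hs j hjC, sum_mul, mul_sum]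
        refine sum_le_sum fun i hi => ?_
        have h1 := scr_dist F C ℓ hℓ C' R hR0 hsep hcov j' hj (g j') i j hi hjC (hgd j' hj)
        have h2 := mul_le_mul_of_nonneg_left h1 (hx0 i (hNF _ hi) j hjC)
        linarith
      · intro i hi hne
        obtain ⟨h1, h2⟩ := xo j' hj hs i hi hne
        rw [h1, mul_zero, zero_add]
        exact sum_eq_zero fun j hjC => by rw [h2 j hjC, zero_mul]
    · obtain ⟨hj, hs⟩ := mem_filter.1 hj'
      rw [hcl j' hj]
      refine le_of_eq (sum_congr rfl fun i hi => ?_)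
      obtain ⟨h1, h2⟩ := xd j' hj hs i hi
      rw [h1]
      congr 1
      exact sum_congr rfl fun j hjC => by rw [h2 j hjC]
end

section
/- Let ι be a finite set, w : ι → ℝ with w i ≥ 0 for all i, and z : ι → ℝ with 0 ≤ z i ≤ 1 for all i. Then there exists z' : ι → ℝ with 0 ≤ z' i ≤ 1 for all i, Σ_{i∈ι} z' i = Σ_{i∈ι} z i, Σ_{i∈ι} w i · z' i ≤ Σ_{i∈ι} w i · z i, and at most one index i with 0 < z' i < 1. -/
open Classical in
theorem air_aux (ι : Type) [Fintype ι] (w : ι → ℝ) (n : ℕ) :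
    ∀ z : ι → ℝ, (∀ i, 0 ≤ z i) → (∀ i, z i ≤ 1) →
    (Finset.univ.filter (fun i => 0 < z i ∧ z i < 1)).card = n →
    ∃ z' : ι → ℝ,
      (∀ i, 0 ≤ z' i) ∧ (∀ i, z' i ≤ 1) ∧
      (∑ i, z' i) = (∑ i, z i) ∧
      (∑ i, w i * z' i) ≤ (∑ i, w i * z i) ∧
      (∀ i j : ι, (0 < z' i ∧ z' i < 1) → (0 < z' j ∧ z' j < 1) → i = j) := by
  induction n using Nat.strong_induction_on with
  | _ n ih =>
  intro z hz0 hz1 hn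
  by_cases h : ∀ i j : ι, (0 < z i ∧ z i < 1) → (0 < z j ∧ z j < 1) → i = j
  · exact ⟨z, hz0, hz1, rfl, le_rfl, h⟩
  have h2 : ∃ i j : ι, (0 < z i ∧ z i < 1) ∧ (0 < z j ∧ z j < 1) ∧ i ≠ j ∧ w i ≤ w j := by
    push Not at h
    obtain ⟨i, j, hi, hj, hne⟩ := h
    rcases le_total (w i) (w j) with hl | hl
    · exact ⟨i, j, hi, hj, hne, hl⟩
    · exact ⟨j, i, hj, hi, hne.symm, hl⟩
  obtain ⟨i, j, hi, hj, hne, hl⟩ := h2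
  obtain ⟨t, ht0, ht1, ht2, ht⟩ : ∃ t : ℝ, 0 < t ∧ t ≤ 1 - z i ∧ t ≤ z j ∧
      (t = 1 - z i ∨ t = z j) :=
    ⟨min (1 - z i) (z j), lt_min (by linarith) hj.1, min_le_left _ _, min_le_right _ _,
      min_choice _ _⟩
  let y : ι → ℝ := fun k => z k + ((if k = i then t else 0) - (if k = j then t else 0))
  have yi : y i = z i + t := by simp [y, hne]
  have yj : y j = z j - t := by simp [y, hne.symm]; ring
  have yk : ∀ k, k ≠ i → k ≠ j → y k = z k := by
    intro k h1 h2; simp [y, h1, h2]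
  have hy : ∀ k, 0 ≤ y k ∧ y k ≤ 1 := by
    intro k
    by_cases h1 : k = i
    · subst h1; rw [yi]; constructor <;> linarith
    by_cases h2 : k = j
    · subst h2; rw [yj]; constructor <;> linarith
    rw [yk k h1 h2]; exact ⟨hz0 k, hz1 k⟩
  have hs : ∑ k, y k = ∑ k, z k := by
    simp [y, Finset.sum_add_distrib, Finset.sum_sub_distrib]
  have hc : ∑ k, w k * y k ≤ ∑ k, w k * z k := by
    have : ∑ k, w k * y k = ∑ k, w k * z k + (w i * t - w j * t) := by
      simp [y, mul_add, mul_sub, Finset.sum_add_distrib, Finset.sum_sub_distrib]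
    nlinarith
  have hlt : (Finset.univ.filter (fun k => 0 < y k ∧ y k < 1)).card < n := by
    rw [← hn]
    apply Finset.card_lt_card
    rw [Finset.ssubset_iff_of_subset]
    · rcases ht with ht | ht
      · refine ⟨i, by simpa using hi, ?_⟩
        have : y i = 1 := by rw [yi]; linarith
        simp [this]
      · refine ⟨j, by simpa using hj, ?_⟩
        have : y j = 0 := by rw [yj]; linarith
        simp [this]
    · intro k hk
      simp only [Finset.mem_filter, Finset.mem_univ, true_and] at hk ⊢
      by_cases h1 : k = i
      · subst h1; exact hi
      by_cases h2 : k = j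
      · subst h2; exact hj
      rwa [yk k h1 h2] at hk
  obtain ⟨z', a, b, c, d, e⟩ := ih _ hlt y (fun k => (hy k).1) (fun k => (hy k).2) rfl
  exact ⟨z', a, b, c.trans hs, d.trans hc, e⟩

/-- Any fractional vector `z ∈ [0,1]^ι` can be replaced by an almost-integral
vector `z'` (at most one fractional coordinate) with the same total mass and no larger
weighted cost. -/
theorem almost_integral_rounding
    (ι : Type) [Fintype ι]
    (w : ι → ℝ) (hw : ∀ i, 0 ≤ w i)
    (z : ι → ℝ) (hz0 : ∀ i, 0 ≤ z i) (hz1 : ∀ i, z i ≤ 1) :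
    ∃ z' : ι → ℝ,
      (∀ i, 0 ≤ z' i) ∧ (∀ i, z' i ≤ 1) ∧
      (∑ i, z' i) = (∑ i, z i) ∧
      (∑ i, w i * z' i) ≤ (∑ i, w i * z i) ∧
      (∀ i j : ι, (0 < z' i ∧ z' i < 1) → (0 < z' j ∧ z' j < 1) → i = j) := by
  exact air_aux ι w _ z hz0 hz1 rfl
end

section
/- Let ι be a finite set, w : ι → ℝ with w i ≥ 0 for all i, and z : ι → ℝ with 0 ≤ z i ≤ 1 for all i. Let ℓ ≥ 2 be real and let L, U, d be reals with 0 ≤ L ≤ U, U > 0, d > U, U·Σ_{i∈ι} z i = d, and L·Σ_{i∈ι} z i ≤ d. Then there exists ẑ : ι → ℝ with ẑ i ∈ {0,1} for every i, such that d ≤ (2 − 1/ℓ)·U·Σ_{i∈ι} ẑ i, (1 − 1/ℓ)·L·Σ_{i∈ι} ẑ i ≤ d, Σ_{i∈ι} ẑ i ≤ (ℓ/(ℓ−1))·Σ_{i∈ι} z i, and Σ_{i∈ι} w i · ẑ i ≤ (ℓ/(ℓ−1))·Σ_{i∈ι} w i · z i. -/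
theorem exists_cheapest {ι : Type} [Fintype ι] [DecidableEq ι] (w : ι → ℝ) (k : ℕ)
    (hk : k ≤ Fintype.card ι) :
    ∃ T : Finset ι, T.card = k ∧ ∀ i ∈ T, ∀ j, j ∉ T → w i ≤ w j := by
  induction k with
  | zero => exact ⟨∅, by simp, by simp⟩
  | succ k ih =>
    obtain ⟨T, hT, hc⟩ := ih (by omega)
    have hne : (Tᶜ).Nonempty := by
      rw [← Finset.card_pos, Finset.card_compl]; omega
    obtain ⟨t, ht, hmin⟩ := Finset.exists_min_image Tᶜ w hne
    rw [Finset.mem_compl] at ht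
    refine ⟨insert t T, by rw [Finset.card_insert_of_notMem ht, hT], ?_⟩
    intro i hi j hj
    rw [Finset.mem_insert, not_or] at hj
    rcases Finset.mem_insert.1 hi with rfl | hi
    · exact hmin j (Finset.mem_compl.2 hj.2)
    · exact hc i hi j hj.2

theorem cheapest_cost {ι : Type} [Fintype ι] [DecidableEq ι] (w z : ι → ℝ)
    (hw : ∀ i, 0 ≤ w i) (hz0 : ∀ i, 0 ≤ z i) (hz1 : ∀ i, z i ≤ 1) (k : ℕ) (hk1 : 1 ≤ k)
    (hk : k ≤ Fintype.card ι) :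
    ∃ y : ι → ℝ, (∀ i, y i = 0 ∨ y i = 1) ∧ ∑ i, y i = k ∧ ∃ c, 0 ≤ c ∧ c ≤ ∑ i, w i * y i ∧
      ∑ i, w i * y i ≤ ∑ i, w i * z i + c * (k - ∑ i, z i) := by
  obtain ⟨T, hT, hc⟩ := exists_cheapest w k hk
  obtain ⟨t, ht, hmax⟩ := Finset.exists_max_image T w (Finset.card_pos.1 (by omega))
  have hsum : ∑ i, (if i ∈ T then (1:ℝ) else 0) = k := by simp [hT]
  refine ⟨fun i => if i ∈ T then 1 else 0, fun i => by by_cases h : i ∈ T <;> simp [h], hsum,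
    w t, hw t, ?_, ?_⟩
  · have := Finset.single_le_sum (f := fun i => w i * (if i ∈ T then (1:ℝ) else 0))
      (fun i _ => mul_nonneg (hw i) (by split_ifs <;> norm_num)) (Finset.mem_univ t)
    simpa [ht] using this
  · rw [← hsum, ← Finset.sum_sub_distrib, Finset.mul_sum, ← Finset.sum_add_distrib]
    refine Finset.sum_le_sum fun i _ => ?_
    by_cases h : i ∈ T
    · simp only [h, if_true]
      nlinarith [hmax i h, hz1 i]
    · simp only [h, if_false]
      nlinarith [hc t ht i h, hz0 i]

/-- Rounding lemma for a dense cluster: a feasible fractional solution `z`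
of the cluster LP with total demand `d > U` can be rounded to an integral vector `ẑ`
violating the upper-bound constraint by factor `(2 - 1/ℓ)`, the lower-bound constraint by
factor `(1 - 1/ℓ)`, and losing at most a factor `ℓ/(ℓ-1)` in cost. -/
theorem dense_cluster_rounding
    (ι : Type) [Fintype ι]
    (w : ι → ℝ) (hw : ∀ i, 0 ≤ w i)
    (z : ι → ℝ) (hz0 : ∀ i, 0 ≤ z i) (hz1 : ∀ i, z i ≤ 1)
    (ℓ : ℝ) (hℓ : 2 ≤ ℓ)
    (L U d : ℝ) (hL : 0 ≤ L) (hLU : L ≤ U) (hU : 0 < U) (hdU : U < d)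
    (hzd : U * (∑ i, z i) = d)
    (hzL : L * (∑ i, z i) ≤ d) :
    ∃ zhat : ι → ℝ,
      (∀ i, zhat i = 0 ∨ zhat i = 1) ∧
      d ≤ (2 - 1 / ℓ) * U * (∑ i, zhat i) ∧
      (1 - 1 / ℓ) * L * (∑ i, zhat i) ≤ d ∧
      (∑ i, zhat i) ≤ (ℓ / (ℓ - 1)) * (∑ i, z i) ∧
      (∑ i, w i * zhat i) ≤ (ℓ / (ℓ - 1)) * (∑ i, w i * z i) := by
  classical
  set S := ∑ i, z i with hS
  have hS1 : 1 < S := by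
    by_contra h
    nlinarith
  have hScard : S ≤ Fintype.card ι := by
    calc S ≤ ∑ _i : ι, (1:ℝ) := Finset.sum_le_sum fun i _ => hz1 i
      _ = _ := by simp
  have hl0 : 0 < ℓ := by linarith
  have hl1 : 0 < ℓ - 1 := by linarith
  have hB : 0 ≤ ∑ i, w i * z i := Finset.sum_nonneg fun i _ => mul_nonneg (hw i) (hz0 i)
  obtain ⟨q, hq⟩ : ∃ q, q = 1 / ℓ := ⟨_, rfl⟩
  have hq0 : 0 < q := by rw [hq]; positivity
  have hq2 : q ≤ 1 / 2 := by rw [hq]; exact one_div_le_one_div_of_le (by norm_num) hℓ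
  have hlam : ℓ / (ℓ - 1) = 1 / (1 - q) := by
    rw [hq]; field_simp
  rw [hlam, ← hq]
  have hp : 0 < 1 - q := by linarith
  -- a suitable number of facilities
  obtain ⟨k, hk1, hkc, hk2, hk3, hk4⟩ : ∃ k : ℕ, 1 ≤ k ∧ k ≤ Fintype.card ι ∧
      S ≤ (2 - q) * k ∧ (1 - q) * k ≤ S ∧ (k : ℝ) - S ≤ q := by
    have h1 : (⌊S⌋₊ : ℝ) ≤ S := Nat.floor_le (by linarith)
    have h2 : S < ⌊S⌋₊ + 1 := Nat.lt_floor_add_one S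
    have h3 : 1 ≤ ⌊S⌋₊ := Nat.le_floor (by simpa using hS1.le)
    have h3' : (1:ℝ) ≤ ⌊S⌋₊ := by exact_mod_cast h3
    by_cases hf : S - ⌊S⌋₊ ≤ 1 - q
    · refine ⟨⌊S⌋₊, h3, by exact_mod_cast h1.trans hScard, ?_, ?_, ?_⟩ <;> nlinarith
    · push Not at hf
      refine ⟨⌊S⌋₊ + 1, by omega, ?_, ?_, ?_, ?_⟩
      · have : (⌊S⌋₊ : ℝ) < Fintype.card ι := by linarith
        have : ⌊S⌋₊ < Fintype.card ι := by exact_mod_cast this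
        omega
      all_goals push_cast; nlinarith
  obtain ⟨y, hy, hyk, c, hc0, hcA, hA⟩ := cheapest_cost w z hw hz0 hz1 k hk1 hkc
  refine ⟨y, hy, ?_, ?_, ?_, ?_⟩
  · rw [hyk, ← hzd]; nlinarith
  · rw [hyk, ← hzd]
    have := mul_le_mul_of_nonneg_left hk3 hL
    nlinarith
  · rw [hyk, one_div_mul_eq_div, le_div_iff₀ hp]; linarith
  · rw [one_div_mul_eq_div, le_div_iff₀ hp]
    rw [← hS] at hA
    have := mul_le_mul_of_nonneg_left hk4 hc0
    nlinarith
end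

section
/- Let an LBUBFL instance with uniform bounds be given, let (x*, y*) be a feasible fractional LP solution, and let ℓ ≥ 2 be real. Then there exist x̄ : F → C → ℝ with x̄ i j ≥ 0 and ȳ : F → ℝ with ȳ i ∈ {0,1} for every i, such that: Σ_{i∈F} x̄ i j ≥ 1 for every j ∈ C; (1 − 1/ℓ)·L·ȳ i ≤ Σ_{j∈C} x̄ i j ≤ (2 − 1/ℓ)·U·ȳ i for every i ∈ F; and Σ_{i∈F} f i · ȳ i + Σ_{i∈F} Σ_{j∈C} dist(i,j) · x̄ i j ≤ (10ℓ + 4)·LPcost(x*, y*). -/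
lemma two_elem (r s g h a b : ℝ) (hr : 0 < r) (hs : 0 < s) (ha0 : 0 ≤ a) (ha1 : a ≤ 1)
    (hb0 : 0 ≤ b) (hb1 : b ≤ 1) (hgh : g * s ≤ h * r) :
    ∃ a' b' : ℝ, 0 ≤ a' ∧ a' ≤ 1 ∧ 0 ≤ b' ∧ b' ≤ 1 ∧ r * a' + s * b' = r * a + s * b ∧
      g * a' + h * b' ≤ g * a + h * b ∧ (a' = 1 ∨ b' = 0) := by
  have key : ∀ t : ℝ, 0 ≤ t → g * (a + t / r) + h * (b - t / s) ≤ g * a + h * b := by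
    intro t ht
    have : g * (t / r) ≤ h * (t / s) := by
      rw [mul_div_assoc', mul_div_assoc', div_le_div_iff₀ hr hs]
      nlinarith
    linarith
  have key2 : ∀ t : ℝ, r * (a + t / r) + s * (b - t / s) = r * a + s * b := by
    intro t; field_simp; ring
  rcases le_total (r * (1 - a)) (s * b) with hc | hc
  · refine ⟨a + (r * (1 - a)) / r, b - (r * (1 - a)) / s, ?_, ?_, ?_, ?_, key2 _, key _ ?_, ?_⟩
    · have : r * (1 - a) / r = 1 - a := by field_simp
      rw [this]; linarith
    · have : r * (1 - a) / r = 1 - a := by field_simp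
      rw [this]; linarith
    · have : r * (1 - a) / s ≤ b := by rw [div_le_iff₀ hs]; linarith
      linarith
    · have : 0 ≤ r * (1 - a) / s := div_nonneg (mul_nonneg hr.le (by linarith)) hs.le
      linarith
    · exact mul_nonneg hr.le (by linarith)
    · left
      have : r * (1 - a) / r = 1 - a := by field_simp
      rw [this]; ring
  · refine ⟨a + (s * b) / r, b - (s * b) / s, ?_, ?_, ?_, ?_, key2 _, key _ ?_, ?_⟩
    · have : 0 ≤ s * b / r := by positivity
      linarith
    · have : s * b / r ≤ 1 - a := by rw [div_le_iff₀ hr]; linarith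
      linarith
    · have : s * b / s = b := by field_simp
      rw [this]; linarith
    · have : s * b / s = b := by field_simp
      rw [this]; linarith
    · positivity
    · right
      have : s * b / s = b := by field_simp
      rw [this]; ring

lemma two_elem' (r s g h a b : ℝ) (hr : 0 < r) (hs : 0 < s) (ha0 : 0 ≤ a) (ha1 : a ≤ 1)
    (hb0 : 0 ≤ b) (hb1 : b ≤ 1) :
    ∃ a' b' : ℝ, 0 ≤ a' ∧ a' ≤ 1 ∧ 0 ≤ b' ∧ b' ≤ 1 ∧ r * a' + s * b' = r * a + s * b ∧
      g * a' + h * b' ≤ g * a + h * b ∧ ((a' = 0 ∨ a' = 1) ∨ (b' = 0 ∨ b' = 1)) := by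
  rcases le_total (g * s) (h * r) with hc | hc
  · obtain ⟨a', b', h1, h2, h3, h4, h5, h6, h7⟩ := two_elem r s g h a b hr hs ha0 ha1 hb0 hb1 hc
    exact ⟨a', b', h1, h2, h3, h4, h5, h6, by tauto⟩
  · obtain ⟨b', a', h1, h2, h3, h4, h5, h6, h7⟩ := two_elem s r h g b a hs hr hb0 hb1 ha0 ha1 hc
    exact ⟨a', b', h3, h4, h1, h2, by linarith, by linarith, by tauto⟩

lemma knap {X : Type} (p0 : X) (r g z : X → ℝ) (S : Finset X)
    (hr : ∀ i ∈ S, 0 < r i) (hz0 : ∀ i ∈ S, 0 ≤ z i) (hz1 : ∀ i ∈ S, z i ≤ 1) :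
    ∃ (z' : X → ℝ) (p : X), (∀ i ∈ S, 0 ≤ z' i ∧ z' i ≤ 1) ∧
      (∑ i ∈ S, r i * z' i = ∑ i ∈ S, r i * z i) ∧
      (∑ i ∈ S, g i * z' i ≤ ∑ i ∈ S, g i * z i) ∧
      (∀ i ∈ S, i ≠ p → z' i = 0 ∨ z' i = 1) := by
  classical
  induction S using Finset.induction_on with
  | empty => exact ⟨z, p0, by simp, by simp, by simp, by simp⟩
  | insert q S hq ih =>
    obtain ⟨z', p, h1, h2, h3, h4⟩ := ih (fun i hi => hr i (Finset.mem_insert_of_mem hi))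
      (fun i hi => hz0 i (Finset.mem_insert_of_mem hi))
      (fun i hi => hz1 i (Finset.mem_insert_of_mem hi))
    have hrq := hr q (Finset.mem_insert_self _ _)
    have hz0q := hz0 q (Finset.mem_insert_self _ _)
    have hz1q := hz1 q (Finset.mem_insert_self _ _)
    by_cases hp : p ∈ S
    · have hpq : p ≠ q := fun h => hq (h ▸ hp)
      obtain ⟨a, b, k1, k2, k3, k4, k5, k6, k7⟩ := two_elem' (r p) (r q) (g p) (g q) (z' p) (z q)
        (hr p (Finset.mem_insert_of_mem hp)) hrq (h1 p hp).1 (h1 p hp).2 hz0q hz1q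
      have hsum : ∀ e : X → ℝ, ∑ i ∈ insert q S, e i * (fun i => if i = q then b else if i = p then a else z' i) i
          = e q * b + (e p * a + (∑ i ∈ S, e i * z' i - e p * z' p)) := by
        intro e
        rw [Finset.sum_insert hq, ← Finset.add_sum_erase S _ hp, ← Finset.add_sum_erase S (fun i => e i * z' i) hp]
        have : ∑ i ∈ S.erase p, e i * (fun i => if i = q then b else if i = p then a else z' i) i
            = ∑ i ∈ S.erase p, e i * z' i := by
          refine Finset.sum_congr rfl fun i hi => ?_
          have hi1 := Finset.ne_of_mem_erase hi
          have hi2 : i ≠ q := fun h => hq (h ▸ Finset.mem_of_mem_erase hi)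
          simp [hi1, hi2]
        rw [this]
        simp [hpq]
      have hf : ∀ i ∈ insert q S, i ≠ p → i ≠ q → z' i = 0 ∨ z' i = 1 := by
        intro i hi hip hiq
        exact h4 i (Finset.mem_of_mem_insert_of_ne hi hiq) hip
      refine ⟨fun i => if i = q then b else if i = p then a else z' i,
        if (a = 0 ∨ a = 1) then q else p, ?_, ?_, ?_, ?_⟩
      · intro i hi
        by_cases hiq : i = q
        · simp [hiq, k3, k4]
        · by_cases hip : i = p
          · simp [hip, hpq, k1, k2]
          · simp only [hiq, hip, if_false]
            exact h1 i (Finset.mem_of_mem_insert_of_ne hi hiq)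
      · rw [hsum, Finset.sum_insert hq]; linarith
      · rw [hsum, Finset.sum_insert hq]; linarith
      · intro i hi hne
        by_cases hiq : i = q
        · subst hiq
          simp only [if_true]
          by_cases ha : a = 0 ∨ a = 1
          · simp [ha] at hne
          · tauto
        · by_cases hip : i = p
          · subst hip
            simp only [hiq, if_false, if_true]
            by_contra ha
            simp [ha] at hne
          · simp only [hiq, hip, if_false]
            exact hf i hi hip hiq
    · have hsum : ∀ e : X → ℝ, ∑ i ∈ insert q S, e i * (fun i => if i = q then z q else z' i) i
          = e q * z q + ∑ i ∈ S, e i * z' i := by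
        intro e
        rw [Finset.sum_insert hq]
        have : ∑ i ∈ S, e i * (fun i => if i = q then z q else z' i) i = ∑ i ∈ S, e i * z' i := by
          refine Finset.sum_congr rfl fun i hi => ?_
          have hi2 : i ≠ q := fun h => hq (h ▸ hi)
          simp [hi2]
        rw [this]; simp
      refine ⟨fun i => if i = q then z q else z' i, q, ?_, ?_, ?_, ?_⟩
      · intro i hi
        by_cases hiq : i = q
        · simp [hiq, hz0q, hz1q]
        · simp only [hiq, if_false]
          exact h1 i (Finset.mem_of_mem_insert_of_ne hi hiq)
      · rw [hsum, Finset.sum_insert hq]; linarith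
      · rw [hsum, Finset.sum_insert hq]; linarith
      · intro i hi hiq
        simp only [hiq, if_false]
        have hiS := Finset.mem_of_mem_insert_of_ne hi hiq
        exact h4 i hiS (fun h => hp (h ▸ hiS))

lemma large_cluster {X : Type} (p0 : X) (S : Finset X) (y w f D : X → ℝ) (L U a : ℝ)
    (hL : 0 < L) (hLU : L ≤ U) (ha : 1 / 2 ≤ a) (ha1 : a < 1)
    (hy0 : ∀ i ∈ S, 0 ≤ y i) (hy1 : ∀ i ∈ S, y i ≤ 1)
    (hlb : ∀ i ∈ S, L * y i ≤ w i) (hub : ∀ i ∈ S, w i ≤ U * y i)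
    (hf : ∀ i ∈ S, 0 ≤ f i) (hD : ∀ i ∈ S, 0 ≤ D i)
    (hW : (1 + a) * U < ∑ i ∈ S, w i) :
    ∃ w' yb : X → ℝ, (∀ i ∈ S, 0 ≤ w' i) ∧ (∀ i ∈ S, yb i = 0 ∨ yb i = 1) ∧
      (∑ i ∈ S, w' i = ∑ i ∈ S, w i) ∧
      (∀ i ∈ S, a * L * yb i ≤ w' i ∧ w' i ≤ (1 + a) * U * yb i) ∧
      (∑ i ∈ S, f i * yb i + ∑ i ∈ S, w' i * D i ≤
        2 * (∑ i ∈ S, f i * y i + ∑ i ∈ S, w i * D i)) := by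
  classical
  have hU : 0 < U := lt_of_lt_of_le hL hLU
  have hrho : ∃ r : X → ℝ, ∀ i ∈ S, L ≤ r i ∧ r i ≤ U ∧ r i * y i = w i := by
    refine ⟨fun i => if y i = 0 then L else w i / y i, fun i hi => ?_⟩
    have h0 := hy0 i hi
    have h1 := hlb i hi
    have h2 := hub i hi
    by_cases h : y i = 0
    · simp only [h, if_true]
      rw [h] at h1 h2
      exact ⟨le_rfl, hLU, by linarith⟩
    · have hp : 0 < y i := lt_of_le_of_ne h0 (Ne.symm h)
      simp only [h, if_false]
      refine ⟨?_, ?_, ?_⟩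
      · rw [le_div_iff₀ hp]; exact h1
      · rw [div_le_iff₀ hp]; exact h2
      · field_simp
  obtain ⟨r, hr⟩ := hrho
  have hrp : ∀ i ∈ S, 0 < r i := fun i hi => lt_of_lt_of_le hL (hr i hi).1
  obtain ⟨z, p, z1, z2, z3, z4⟩ := knap p0 r (fun i => f i + r i * D i) y S hrp hy0 hy1
  have e1 : ∑ i ∈ S, r i * y i = ∑ i ∈ S, w i := Finset.sum_congr rfl fun i hi => (hr i hi).2.2
  have e2 : ∑ i ∈ S, (f i + r i * D i) * y i = ∑ i ∈ S, f i * y i + ∑ i ∈ S, w i * D i := by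
    rw [← Finset.sum_add_distrib]
    refine Finset.sum_congr rfl fun i hi => ?_
    rw [← (hr i hi).2.2]; ring
  rw [e1] at z2
  rw [e2] at z3
  rw [← z2] at hW ⊢
  have z3' : 2 * ∑ i ∈ S, (f i + r i * D i) * z i ≤
      2 * (∑ i ∈ S, f i * y i + ∑ i ∈ S, w i * D i) := by linarith
  by_cases hc : p ∈ S ∧ a ≤ z p
  · obtain ⟨hpS, hap⟩ := hc
    refine ⟨fun i => r i * z i, fun i => if i = p then 1 else z i, ?_, ?_, rfl, ?_, ?_⟩
    · exact fun i hi => mul_nonneg (hrp i hi).le (z1 i hi).1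
    · intro i hi
      by_cases h : i = p
      · simp [h]
      · simpa [h] using z4 i hi h
    · intro i hi
      have := hr i hi
      have hz := z1 i hi
      by_cases h : i = p
      · subst h
        simp only [if_true]
        constructor
        · nlinarith [mul_nonneg (sub_nonneg.2 this.1) hz.1]
        · nlinarith [mul_nonneg (hrp i hi).le (sub_nonneg.2 hz.2)]
      · simp only [h, if_false]
        constructor
        · have : a * L ≤ r i := by nlinarith
          exact mul_le_mul_of_nonneg_right this hz.1
        · have : r i ≤ (1 + a) * U := by nlinarith
          exact mul_le_mul_of_nonneg_right this hz.1
    · refine le_trans ?_ z3'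
      rw [← Finset.sum_add_distrib, Finset.mul_sum]
      refine Finset.sum_le_sum fun i hi => ?_
      have hz := z1 i hi
      have hfi := hf i hi
      have hrD : 0 ≤ r i * D i * z i := mul_nonneg (mul_nonneg (hrp i hi).le (hD i hi)) hz.1
      by_cases h : i = p
      · subst h
        simp only [if_true]
        nlinarith
      · simp only [h, if_false]
        nlinarith [mul_nonneg hfi hz.1]
  · set z0 : X → ℝ := fun i => if i = p then 0 else z i with hz0
    have hz0n : ∀ i ∈ S, 0 ≤ z0 i ∧ z0 i ≤ z i := by
      intro i hi
      have := z1 i hi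
      by_cases h : i = p
      · simp only [hz0, h, if_true]; exact ⟨le_rfl, h ▸ this.1⟩
      · simp only [hz0, h, if_false]; exact ⟨this.1, le_rfl⟩
    have hT : ∑ i ∈ S, r i * z i - a * U ≤ ∑ i ∈ S, r i * z0 i := by
      by_cases hpS : p ∈ S
      · have hlt : z p < a := by
          by_contra h; exact hc ⟨hpS, not_lt.1 h⟩
        rw [← Finset.add_sum_erase S _ hpS, ← Finset.add_sum_erase S (fun i => r i * z0 i) hpS]
        have : ∑ i ∈ S.erase p, r i * z0 i = ∑ i ∈ S.erase p, r i * z i := by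
          refine Finset.sum_congr rfl fun i hi => ?_
          simp [hz0, Finset.ne_of_mem_erase hi]
        rw [this]
        have h0 : z0 p = 0 := by simp [hz0]
        rw [h0]
        have : r p * z p ≤ U * a :=
          mul_le_mul (hr p hpS).2.1 hlt.le (z1 p hpS).1 hU.le
        linarith
      · have : ∑ i ∈ S, r i * z0 i = ∑ i ∈ S, r i * z i := by
          refine Finset.sum_congr rfl fun i hi => ?_
          have : i ≠ p := fun h => hpS (h ▸ hi)
          simp [hz0, this]
        rw [this]
        nlinarith
    set W := ∑ i ∈ S, r i * z i
    set T := ∑ i ∈ S, r i * z0 i with hTdef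
    have hTp : 0 < T := by nlinarith
    have hTW : T ≤ W := Finset.sum_le_sum fun i hi =>
      mul_le_mul_of_nonneg_left (hz0n i hi).2 (hrp i hi).le
    have hq1 : 1 ≤ W / T := by rw [le_div_iff₀ hTp]; linarith
    have hq2 : W / T ≤ 1 + a := by rw [div_le_iff₀ hTp]; nlinarith
    set q := W / T with hq
    have hqT : q * T = W := by rw [hq]; field_simp
    refine ⟨fun i => r i * z0 i * q, z0, ?_, ?_, ?_, ?_, ?_⟩
    · exact fun i hi => mul_nonneg (mul_nonneg (hrp i hi).le (hz0n i hi).1) (by linarith)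
    · intro i hi
      by_cases h : i = p
      · simp [hz0, h]
      · simpa [hz0, h] using z4 i hi h
    · rw [← Finset.sum_mul, mul_comm]; exact hqT
    · intro i hi
      have := hr i hi
      have h0 := (hz0n i hi).1
      have hrpi := hrp i hi
      constructor
      · have : a * L ≤ r i * q := by nlinarith
        nlinarith [mul_le_mul_of_nonneg_right this h0]
      · have : r i * q ≤ (1 + a) * U := by
          rw [mul_comm]; exact mul_le_mul hq2 this.2.1 hrpi.le (by linarith)
        nlinarith [mul_le_mul_of_nonneg_right this h0]
    · refine le_trans ?_ z3'
      rw [← Finset.sum_add_distrib, Finset.mul_sum]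
      refine Finset.sum_le_sum fun i hi => ?_
      have h0 := hz0n i hi
      have hfi := hf i hi
      have hrD : 0 ≤ r i * D i := mul_nonneg (hrp i hi).le (hD i hi)
      have t1 : f i * z0 i ≤ f i * z i := mul_le_mul_of_nonneg_left h0.2 hfi
      have t2 : r i * D i * z0 i ≤ r i * D i * z i := mul_le_mul_of_nonneg_left h0.2 hrD
      have t3 : 0 ≤ r i * D i * z0 i := mul_nonneg hrD h0.1
      have t4 : 0 ≤ f i * z0 i := mul_nonneg hfi h0.1
      have t5 : r i * D i * z0 i * q ≤ r i * D i * z0 i * 2 :=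
        mul_le_mul_of_nonneg_left (by linarith) t3
      have : f i * z0 i + r i * z0 i * q * D i = f i * z0 i + r i * D i * z0 i * q := by ring
      simp only [this]
      linarith

lemma exists_centers {X : Type} [MetricSpace X] (C : Finset X) (c : X → ℝ) (m : ℝ) (hm : 0 ≤ m)
    (hc : ∀ j ∈ C, 0 ≤ c j) :
    ∃ K ⊆ C, (∀ j ∈ K, ∀ k ∈ K, j ≠ k → m * c j < dist j k) ∧
      (∀ j ∈ C, ∃ k ∈ K, dist j k ≤ m * c j ∧ c k ≤ c j) := by
  classical
  induction C using Finset.induction_on_max_value c with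
  | empty => exact ⟨∅, by simp, by simp, by simp⟩
  | insert a s ha hmax ih =>
    obtain ⟨K, hK, h1, h2⟩ := ih (fun j hj => hc j (Finset.mem_insert_of_mem hj))
    by_cases h : ∃ k ∈ K, dist a k ≤ m * c a
    · obtain ⟨k, hk, hd⟩ := h
      refine ⟨K, hK.trans (Finset.subset_insert _ _), h1, fun j hj => ?_⟩
      rcases Finset.mem_insert.1 hj with rfl | hj
      · exact ⟨k, hk, hd, hmax k (hK hk)⟩
      · exact h2 j hj
    · push Not at h
      refine ⟨insert a K, Finset.insert_subset_insert _ hK, ?_, fun j hj => ?_⟩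
      · intro j hj k hk hne
        rcases Finset.mem_insert.1 hj with hj1 | hj1 <;> rcases Finset.mem_insert.1 hk with hk1 | hk1
        · exact absurd (hj1.trans hk1.symm) hne
        · rw [hj1]; exact h k hk1
        · rw [dist_comm, hk1]
          exact lt_of_le_of_lt (mul_le_mul_of_nonneg_left (hmax j (hK hj1)) hm) (h j hj1)
        · exact h1 j hj1 k hk1 hne
      · rcases Finset.mem_insert.1 hj with rfl | hj
        · refine ⟨j, Finset.mem_insert_self _ _, ?_, le_rfl⟩
          rw [dist_self]; exact mul_nonneg hm (hc j (Finset.mem_insert_self _ _))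
        · obtain ⟨k, hk, h3⟩ := h2 j hj
          exact ⟨k, Finset.mem_insert_of_mem hk, h3⟩

lemma reroute {X : Type} [MetricSpace X] (S C : Finset X) (x : X → X → ℝ) (w' : X → ℝ) (k : X)
    (W : ℝ) (hW : 0 < W) (hx0 : ∀ i ∈ S, ∀ j ∈ C, 0 ≤ x i j)
    (hWx : ∑ i ∈ S, ∑ j ∈ C, x i j = W) (hw0 : ∀ i ∈ S, 0 ≤ w' i) (hw : ∑ i ∈ S, w' i = W) :
    (∀ j, ∑ i ∈ S, (∑ i' ∈ S, x i' j) * (w' i / W) = ∑ i' ∈ S, x i' j) ∧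
    (∀ i, ∑ j ∈ C, (∑ i' ∈ S, x i' j) * (w' i / W) = w' i) ∧
    (∑ i ∈ S, ∑ j ∈ C, dist i j * ((∑ i' ∈ S, x i' j) * (w' i / W)) ≤
      ∑ i ∈ S, ∑ j ∈ C, x i j * (dist i j + dist i k) + ∑ i ∈ S, w' i * dist i k) := by
  have hv : ∑ i ∈ S, w' i / W = 1 := by
    rw [← Finset.sum_div, hw, div_self hW.ne']
  have hP : ∑ j ∈ C, ∑ i' ∈ S, x i' j = W := by rw [Finset.sum_comm, hWx]
  refine ⟨fun j => ?_, fun i => ?_, ?_⟩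
  · rw [← Finset.mul_sum, hv, mul_one]
  · rw [← Finset.sum_mul, hP]; field_simp
  · set A := ∑ i ∈ S, ∑ j ∈ C, x i j * (dist i j + dist i k) with hA
    have step : ∀ i ∈ S, ∑ j ∈ C, dist i j * ((∑ i' ∈ S, x i' j) * (w' i / W)) ≤
        (A + W * dist i k) * (w' i / W) := by
      intro i hi
      have hvi : 0 ≤ w' i / W := div_nonneg (hw0 i hi) hW.le
      have : ∑ j ∈ C, dist i j * ((∑ i' ∈ S, x i' j) * (w' i / W)) =
          (∑ j ∈ C, ∑ i' ∈ S, dist i j * x i' j) * (w' i / W) := by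
        rw [Finset.sum_mul]
        refine Finset.sum_congr rfl fun j _ => ?_
        rw [← Finset.mul_sum]; ring
      rw [this]
      refine mul_le_mul_of_nonneg_right ?_ hvi
      have : A + W * dist i k =
          ∑ j ∈ C, ∑ i' ∈ S, (x i' j * (dist i' j + dist i' k) + x i' j * dist i k) := by
        simp only [Finset.sum_add_distrib]
        rw [hA, Finset.sum_comm, ← hP, Finset.sum_mul]
        simp only [Finset.sum_mul]
      rw [this]
      refine Finset.sum_le_sum fun j hj => Finset.sum_le_sum fun i' hi' => ?_
      have h1 := dist_triangle4 i k i' j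
      rw [dist_comm k i'] at h1
      have := mul_le_mul_of_nonneg_right h1 (hx0 i' hi' j hj)
      linarith
    refine (Finset.sum_le_sum step).trans (le_of_eq ?_)
    have : ∀ i, (A + W * dist i k) * (w' i / W) = A * (w' i / W) + w' i * dist i k := by
      intro i; field_simp
    simp only [this]
    rw [Finset.sum_add_distrib, ← Finset.mul_sum, hv, mul_one]

lemma markov {X : Type} [MetricSpace X] (F : Finset X) (v : X → ℝ) (k : X) (c ℓ : ℝ)
    (hℓ : 2 ≤ ℓ) (hv : ∀ i ∈ F, 0 ≤ v i) (h1 : 1 ≤ ∑ i ∈ F, v i) (hc0 : 0 ≤ c)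
    (hc : (∑ i ∈ F, v i) * c = ∑ i ∈ F, dist i k * v i) :
    1 - 1 / ℓ ≤ ∑ i ∈ F with dist i k ≤ ℓ * c, v i := by
  classical
  have hsplit := Finset.sum_filter_add_sum_filter_not F (fun i => dist i k ≤ ℓ * c) v
  have hℓ1 : 0 ≤ 1 - 1 / ℓ := by
    have : 1 / ℓ ≤ 1 := by rw [div_le_iff₀ (by linarith)]; linarith
    linarith
  have hout0 : 0 ≤ ∑ i ∈ F with ¬ dist i k ≤ ℓ * c, v i :=
    Finset.sum_nonneg fun i hi => hv i (Finset.mem_filter.1 hi).1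
  suffices h : ∑ i ∈ F with ¬ dist i k ≤ ℓ * c, v i ≤ (∑ i ∈ F, v i) * (1 / ℓ) by
    nlinarith
  have hle : ∑ i ∈ F with ¬ dist i k ≤ ℓ * c, dist i k * v i ≤ (∑ i ∈ F, v i) * c := by
    rw [hc]
    exact Finset.sum_le_sum_of_subset_of_nonneg (Finset.filter_subset _ _)
      fun i hi _ => mul_nonneg dist_nonneg (hv i hi)
  rcases hc0.eq_or_lt with h0 | h0
  · have hz : ∀ i ∈ F.filter (fun i => ¬ dist i k ≤ ℓ * c), v i = 0 := by
      rw [← h0, mul_zero] at hle hc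
      have := (Finset.sum_eq_zero_iff_of_nonneg
        (fun i hi => mul_nonneg dist_nonneg (hv i hi))).1 hc.symm
      intro i hi
      obtain ⟨hiF, hd⟩ := Finset.mem_filter.1 hi
      rw [← h0, mul_zero] at hd
      rcases mul_eq_zero.1 (this i hiF) with h | h
      · exact absurd h.le hd
      · exact h
    rw [Finset.sum_eq_zero hz]
    have : 0 ≤ 1 / ℓ := by apply one_div_nonneg.2; linarith
    exact mul_nonneg (by linarith) this
  · have : (∑ i ∈ F with ¬ dist i k ≤ ℓ * c, v i) * (ℓ * c) ≤ (∑ i ∈ F, v i) * c := by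
      refine le_trans ?_ hle
      rw [Finset.sum_mul]
      refine Finset.sum_le_sum fun i hi => ?_
      obtain ⟨hiF, hd⟩ := Finset.mem_filter.1 hi
      rw [mul_comm]
      exact mul_le_mul_of_nonneg_right (not_le.1 hd).le (hv i hiF)
    rw [mul_one_div, le_div_iff₀ (by linarith)]
    rw [← mul_assoc] at this
    exact le_of_mul_le_mul_right this h0

lemma main_aux
    (X : Type) [MetricSpace X]
    (F C : Finset X) (f : X → ℝ) (L U : ℕ)
    (hf : ∀ i ∈ F, 0 ≤ f i) (hL : 0 < L) (hLU : L ≤ U)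
    (x : X → X → ℝ) (y : X → ℝ)
    (hx1 : ∀ j ∈ C, 1 ≤ ∑ i ∈ F, x i j)
    (hlb : ∀ i ∈ F, (L : ℝ) * y i ≤ ∑ j ∈ C, x i j)
    (hub : ∀ i ∈ F, ∑ j ∈ C, x i j ≤ (U : ℝ) * y i)
    (hx0 : ∀ i ∈ F, ∀ j ∈ C, 0 ≤ x i j)
    (hxy : ∀ i ∈ F, ∀ j ∈ C, x i j ≤ y i)
    (hy1 : ∀ i ∈ F, y i ≤ 1)
    (ℓ : ℝ) (hℓ : 2 ≤ ℓ) (hC : C.Nonempty) :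
    ∃ (xbar : X → X → ℝ) (ybar : X → ℝ),
      (∀ i ∈ F, ∀ j ∈ C, 0 ≤ xbar i j) ∧
      (∀ i ∈ F, ybar i = 0 ∨ ybar i = 1) ∧
      (∀ j ∈ C, 1 ≤ ∑ i ∈ F, xbar i j) ∧
      (∀ i ∈ F, (1 - 1 / ℓ) * (L : ℝ) * ybar i ≤ ∑ j ∈ C, xbar i j ∧
        ∑ j ∈ C, xbar i j ≤ (2 - 1 / ℓ) * (U : ℝ) * ybar i) ∧
      ((∑ i ∈ F, f i * ybar i) + ∑ i ∈ F, ∑ j ∈ C, dist i j * xbar i j ≤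
        (10 * ℓ + 4) *
          ((∑ i ∈ F, f i * y i) + ∑ i ∈ F, ∑ j ∈ C, dist i j * x i j)) := by
  classical
  have hLr : (0 : ℝ) < L := by exact_mod_cast hL
  have hLUr : (L : ℝ) ≤ U := by exact_mod_cast hLU
  have hUr : (0 : ℝ) < U := by linarith
  obtain ⟨j0, hj0⟩ := hC
  have hy0 : ∀ i ∈ F, 0 ≤ y i := fun i hi => (hx0 i hi j0 hj0).trans (hxy i hi j0 hj0)
  obtain ⟨a, haℓ⟩ : ∃ a, a = 1 - 1 / ℓ := ⟨_, rfl⟩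
  have h2a : 2 - 1 / ℓ = 1 + a := by rw [haℓ]; ring
  have ha : 1 / 2 ≤ a := by
    have : 1 / ℓ ≤ 1 / 2 := one_div_le_one_div_of_le (by norm_num) hℓ
    linarith
  have ha1 : a < 1 := by
    have : 0 < 1 / ℓ := by apply one_div_pos.2; linarith
    linarith
  rw [h2a, ← haℓ]
  obtain ⟨c, hc0, hc⟩ : ∃ c : X → ℝ, (∀ j ∈ C, 0 ≤ c j) ∧
      ∀ j ∈ C, (∑ i ∈ F, x i j) * c j = ∑ i ∈ F, dist i j * x i j := by
    refine ⟨fun j => (∑ i ∈ F, dist i j * x i j) / (∑ i ∈ F, x i j), fun j hj => ?_,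
      fun j hj => ?_⟩
    · exact div_nonneg (Finset.sum_nonneg fun i hi => mul_nonneg dist_nonneg (hx0 i hi j hj))
        (by linarith [hx1 j hj])
    · have : (∑ i ∈ F, x i j) ≠ 0 := by linarith [hx1 j hj]
      field_simp
  obtain ⟨K, hKC, hK1, hK2⟩ := exists_centers C c (2 * ℓ) (by linarith) hc0
  have hKne : K.Nonempty := by
    obtain ⟨k, hk, _⟩ := hK2 j0 hj0
    exact ⟨k, hk⟩
  have hctr : ∀ i : X, ∃ k ∈ K, ∀ k' ∈ K, dist i k ≤ dist i k' := fun i =>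
    Finset.exists_min_image K (fun k => dist i k) hKne
  choose ctr hctrK hctrm using hctr
  have hA : ∀ i, ∀ j ∈ C, dist i (ctr i) ≤ dist i j + 2 * ℓ * c j := by
    intro i j hj
    obtain ⟨k, hk, h1, h2⟩ := hK2 j hj
    linarith [hctrm i k hk, dist_triangle i j k]
  have hB : ∀ i, ∀ j ∈ C, ℓ * c (ctr i) ≤ dist i j + 2 * ℓ * c j := by
    intro i j hj
    obtain ⟨k, hk, h1, h2⟩ := hK2 j hj
    have hcj := hc0 j hj
    have hd : 0 ≤ dist i j := dist_nonneg
    by_cases h : ctr i = k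
    · rw [h]
      nlinarith
    · have h3 := hK1 (ctr i) (hctrK i) k hk h
      have h4 := hctrm i k hk
      have h5 := dist_triangle i j k
      have h6 := dist_triangle_left (ctr i) k i
      linarith
  have hball : ∀ k ∈ K, ∀ i, dist i k ≤ ℓ * c k → ctr i = k := by
    intro k hk i hi
    by_contra h
    have h1 := hK1 k hk (ctr i) (hctrK i) (Ne.symm h)
    have h2 := hctrm i k hk
    have h3 := dist_triangle_left k (ctr i) i
    linarith
  set S : X → Finset X := fun k => F.filter (fun i => ctr i = k) with hS
  have hSF : ∀ k, ∀ i ∈ S k, i ∈ F ∧ ctr i = k := fun k i hi => Finset.mem_filter.1 hi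
  set w : X → ℝ := fun i => ∑ j ∈ C, x i j with hw
  set E : X → ℝ := fun i => ∑ j ∈ C, x i j * (dist i j + 2 * ℓ * c j) with hE
  have hwA : ∀ i ∈ F, w i * dist i (ctr i) ≤ E i := by
    intro i hi
    rw [hw, hE]
    simp only [Finset.sum_mul]
    exact Finset.sum_le_sum fun j hj => mul_le_mul_of_nonneg_left (hA i j hj) (hx0 i hi j hj)
  have hwB : ∀ i ∈ F, w i * (ℓ * c (ctr i)) ≤ E i := by
    intro i hi
    rw [hw, hE]
    simp only [Finset.sum_mul]
    exact Finset.sum_le_sum fun j hj => mul_le_mul_of_nonneg_left (hB i j hj) (hx0 i hi j hj)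
  have hE0 : ∀ i ∈ F, 0 ≤ E i := by
    intro i hi
    refine Finset.sum_nonneg fun j hj => mul_nonneg (hx0 i hi j hj) ?_
    have := hc0 j hj
    positivity
  have hmass : ∀ k ∈ K, a ≤ ∑ i ∈ F with dist i k ≤ ℓ * c k, y i := by
    intro k hk
    have := markov F (fun i => x i k) k (c k) ℓ hℓ (fun i hi => hx0 i hi k (hKC hk))
      (hx1 k (hKC hk)) (hc0 k (hKC hk)) (hc k (hKC hk))
    rw [← haℓ] at this
    exact this.trans (Finset.sum_le_sum fun i hi =>
      hxy i (Finset.mem_filter.1 hi).1 k (hKC hk))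
  have hBS : ∀ k ∈ K, F.filter (fun i => dist i k ≤ ℓ * c k) ⊆ S k := by
    intro k hk i hi
    obtain ⟨h1, h2⟩ := Finset.mem_filter.1 hi
    exact Finset.mem_filter.2 ⟨h1, hball k hk i h2⟩
  have hWlb : ∀ k ∈ K, a * L ≤ ∑ i ∈ S k, w i := by
    intro k hk
    have h1 : ∑ i ∈ F with dist i k ≤ ℓ * c k, y i ≤ ∑ i ∈ S k, y i :=
      Finset.sum_le_sum_of_subset_of_nonneg (hBS k hk) fun i hi _ => hy0 i (hSF k i hi).1
    have h2 : (L : ℝ) * ∑ i ∈ S k, y i ≤ ∑ i ∈ S k, w i := by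
      rw [Finset.mul_sum]
      exact Finset.sum_le_sum fun i hi => hlb i (hSF k i hi).1
    nlinarith [hmass k hk]
  have hcl : ∀ k ∈ K, ∃ w' yb : X → ℝ, (∀ i ∈ S k, 0 ≤ w' i) ∧
      (∀ i ∈ S k, yb i = 0 ∨ yb i = 1) ∧
      (∑ i ∈ S k, w' i = ∑ i ∈ S k, w i) ∧
      (∀ i ∈ S k, a * L * yb i ≤ w' i ∧ w' i ≤ (1 + a) * U * yb i) ∧
      (∑ i ∈ S k, f i * yb i + ∑ i ∈ S k, w' i * dist i k ≤
        2 * (∑ i ∈ S k, f i * y i + ∑ i ∈ S k, E i)) := by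
    intro k hk
    have hW0 := hWlb k hk
    have haL : 0 < a * L := by positivity
    by_cases hbig : (1 + a) * U < ∑ i ∈ S k, w i
    · obtain ⟨w', yb, g1, g2, g3, g4, g5⟩ := large_cluster j0 (S k) y w f (fun i => dist i k) L U a
        hLr hLUr ha ha1 (fun i hi => hy0 i (hSF k i hi).1) (fun i hi => hy1 i (hSF k i hi).1)
        (fun i hi => hlb i (hSF k i hi).1) (fun i hi => hub i (hSF k i hi).1)
        (fun i hi => hf i (hSF k i hi).1) (fun i hi => dist_nonneg) hbig
      refine ⟨w', yb, g1, g2, g3, g4, g5.trans ?_⟩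
      have : ∑ i ∈ S k, w i * dist i k ≤ ∑ i ∈ S k, E i := Finset.sum_le_sum fun i hi => by
        have := hwA i (hSF k i hi).1
        rwa [(hSF k i hi).2] at this
      linarith
    · rw [not_lt] at hbig
      have hne : (F.filter (fun i => dist i k ≤ ℓ * c k)).Nonempty := by
        by_contra h
        rw [Finset.not_nonempty_iff_eq_empty] at h
        have := hmass k hk
        rw [h, Finset.sum_empty] at this
        linarith
      obtain ⟨i0, hi0, hmin⟩ := Finset.exists_min_image _ f hne
      have hi0S := hBS k hk hi0
      obtain ⟨hi0F, hi0d⟩ := Finset.mem_filter.1 hi0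
      set W := ∑ i ∈ S k, w i
      refine ⟨fun i => if i = i0 then W else 0, fun i => if i = i0 then 1 else 0, ?_, ?_, ?_, ?_, ?_⟩
      · intro i hi
        by_cases h : i = i0
        · simp only [h, if_true]; linarith
        · simp [h]
      · intro i hi
        by_cases h : i = i0 <;> simp [h]
      · simp [hi0S]
      · intro i hi
        by_cases h : i = i0
        · simp only [h, if_true, mul_one]; exact ⟨hW0, hbig⟩
        · simp [h]
      · simp only [mul_ite, mul_one, mul_zero, ite_mul, zero_mul]
        rw [Finset.sum_ite_eq' (S k) i0, Finset.sum_ite_eq' (S k) i0 (fun i => W * dist i k)]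
        simp only [hi0S, if_true]
        have t1 : W * dist i0 k ≤ ∑ i ∈ S k, E i := by
          refine (mul_le_mul_of_nonneg_left hi0d (by linarith)).trans ?_
          rw [Finset.sum_mul]
          refine Finset.sum_le_sum fun i hi => ?_
          have := hwB i (hSF k i hi).1
          rwa [(hSF k i hi).2] at this
        have t2 : f i0 * (∑ i ∈ F with dist i k ≤ ℓ * c k, y i) ≤ ∑ i ∈ S k, f i * y i := by
          rw [Finset.mul_sum]
          refine le_trans (Finset.sum_le_sum fun i hi => ?_)
            (Finset.sum_le_sum_of_subset_of_nonneg (hBS k hk) fun i hi _ =>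
              mul_nonneg (hf i (hSF k i hi).1) (hy0 i (hSF k i hi).1))
          exact mul_le_mul_of_nonneg_right (hmin i hi) (hy0 i (Finset.mem_filter.1 hi).1)
        have t3 : f i0 * (1 / 2) ≤ f i0 * (∑ i ∈ F with dist i k ≤ ℓ * c k, y i) :=
          mul_le_mul_of_nonneg_left (ha.trans (hmass k hk)) (hf i0 hi0F)
        have t4 : 0 ≤ ∑ i ∈ S k, E i := Finset.sum_nonneg fun i hi => hE0 i (hSF k i hi).1
        linarith
  choose! w' yb g1 g2 g3 g4 g5 using hcl
  have hWpos : ∀ k ∈ K, 0 < ∑ i ∈ S k, w i := fun k hk =>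
    lt_of_lt_of_le (by positivity) (hWlb k hk)
  have hre := fun k (hk : k ∈ K) => reroute (S k) C x (w' k) k (∑ i ∈ S k, w i) (hWpos k hk)
    (fun i hi => hx0 i (hSF k i hi).1) rfl (g1 k hk) (g3 k hk)
  have hfib : ∀ g : X → ℝ, ∑ i ∈ F, g i = ∑ k ∈ K, ∑ i ∈ S k, g i := fun g =>
    (Finset.sum_fiberwise_of_maps_to (fun i _ => hctrK i) g).symm
  have hmem : ∀ i ∈ F, i ∈ S (ctr i) := fun i hi => Finset.mem_filter.2 ⟨hi, rfl⟩
  set xb : X → X → X → ℝ := fun k i j =>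
    (∑ i' ∈ S k, x i' j) * (w' k i / ∑ i ∈ S k, w i) with hxb
  refine ⟨fun i j => xb (ctr i) i j, fun i => yb (ctr i) i, ?_, ?_, ?_, ?_, ?_⟩
  · intro i hi j hj
    refine mul_nonneg (Finset.sum_nonneg fun i' hi' => hx0 i' (hSF _ i' hi').1 j hj) ?_
    exact div_nonneg (g1 _ (hctrK i) i (hmem i hi)) (hWpos _ (hctrK i)).le
  · exact fun i hi => g2 _ (hctrK i) i (hmem i hi)
  · intro j hj
    refine (hx1 j hj).trans (le_of_eq ?_)
    rw [hfib, hfib]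
    refine Finset.sum_congr rfl fun k hk => ?_
    rw [← (hre k hk).1 j]
    refine Finset.sum_congr rfl fun i hi => ?_
    change xb k i j = xb (ctr i) i j
    rw [(hSF k i hi).2]
  · intro i hi
    have h1 : ∑ j ∈ C, xb (ctr i) i j = w' (ctr i) i := (hre _ (hctrK i)).2.1 i
    rw [h1]
    exact g4 _ (hctrK i) i (hmem i hi)
  · have hEsum : ∑ i ∈ F, E i = (1 + 2 * ℓ) * ∑ i ∈ F, ∑ j ∈ C, dist i j * x i j := by
      have h1 : ∀ i, E i = ∑ j ∈ C, dist i j * x i j + 2 * ℓ * ∑ j ∈ C, x i j * c j := by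
        intro i
        rw [hE, Finset.mul_sum, ← Finset.sum_add_distrib]
        refine Finset.sum_congr rfl fun j _ => ?_
        ring
      have h2 : ∑ i ∈ F, ∑ j ∈ C, x i j * c j = ∑ i ∈ F, ∑ j ∈ C, dist i j * x i j := by
        rw [Finset.sum_comm, Finset.sum_comm (s := F)]
        refine Finset.sum_congr rfl fun j hj => ?_
        rw [← hc j hj, Finset.sum_mul]
      simp only [h1]
      rw [Finset.sum_add_distrib, ← Finset.mul_sum, h2]; ring
    have hmain : (∑ i ∈ F, f i * yb (ctr i) i) + ∑ i ∈ F, ∑ j ∈ C, dist i j * xb (ctr i) i j ≤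
        ∑ i ∈ F, (2 * (f i * y i) + 3 * E i + ∑ j ∈ C, dist i j * x i j) := by
      rw [hfib, hfib (fun i => ∑ j ∈ C, dist i j * xb (ctr i) i j), hfib (fun i => _ + _ + _),
        ← Finset.sum_add_distrib]
      refine Finset.sum_le_sum fun k hk => ?_
      have q1 : ∑ i ∈ S k, f i * yb (ctr i) i = ∑ i ∈ S k, f i * yb k i :=
        Finset.sum_congr rfl fun i hi => by rw [(hSF k i hi).2]
      have q2 : ∑ i ∈ S k, ∑ j ∈ C, dist i j * xb (ctr i) i j =
          ∑ i ∈ S k, ∑ j ∈ C, dist i j * xb k i j :=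
        Finset.sum_congr rfl fun i hi => by rw [(hSF k i hi).2]
      have q3 := (hre k hk).2.2
      have q4 : ∑ i ∈ S k, ∑ j ∈ C, x i j * (dist i j + dist i k) ≤
          ∑ i ∈ S k, (∑ j ∈ C, dist i j * x i j + E i) := by
        refine Finset.sum_le_sum fun i hi => ?_
        have := hwA i (hSF k i hi).1
        rw [(hSF k i hi).2] at this
        have e : ∑ j ∈ C, x i j * (dist i j + dist i k) =
            ∑ j ∈ C, dist i j * x i j + w i * dist i k := by
          rw [hw, Finset.sum_mul, ← Finset.sum_add_distrib]
          refine Finset.sum_congr rfl fun j _ => ?_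
          ring
        rw [e]; linarith
      have q5 := g5 k hk
      rw [q1, q2]
      simp only [Finset.sum_add_distrib, ← Finset.mul_sum] at q4 ⊢
      simp only [hxb]
      linarith
    refine hmain.trans ?_
    simp only [Finset.sum_add_distrib, ← Finset.mul_sum]
    rw [hEsum]
    have p1 : 0 ≤ ∑ i ∈ F, f i * y i :=
      Finset.sum_nonneg fun i hi => mul_nonneg (hf i hi) (hy0 i hi)
    have p2 : 0 ≤ ∑ i ∈ F, ∑ j ∈ C, dist i j * x i j :=
      Finset.sum_nonneg fun i hi => Finset.sum_nonneg fun j hj =>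
        mul_nonneg dist_nonneg (hx0 i hi j hj)
    nlinarith [mul_nonneg (by linarith : (0 : ℝ) ≤ ℓ) p1, mul_nonneg (by linarith : (0 : ℝ) ≤ ℓ) p2]



/-- Integrally opened solution: from a feasible fractional LP solution
`(x*, y*)` of an LBUBFL instance with uniform bounds one obtains a solution `(x̄, ȳ)` with
`ȳ ∈ {0,1}^F` (assignments may stay fractional) serving every client, with loads between
`(1 - 1/ℓ)·L·ȳ i` and `(2 - 1/ℓ)·U·ȳ i`, of cost at most `(10ℓ + 4)` times the LP cost. -/
theorem integrally_opened_solution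
    (X : Type) [MetricSpace X]
    (F C : Finset X) (f : X → ℝ) (L U : ℕ)
    (hf : ∀ i ∈ F, 0 ≤ f i) (hL : 0 < L) (hLU : L ≤ U)
    (x : X → X → ℝ) (y : X → ℝ)
    (hx1 : ∀ j ∈ C, 1 ≤ ∑ i ∈ F, x i j)
    (hlb : ∀ i ∈ F, (L : ℝ) * y i ≤ ∑ j ∈ C, x i j)
    (hub : ∀ i ∈ F, ∑ j ∈ C, x i j ≤ (U : ℝ) * y i)
    (hx0 : ∀ i ∈ F, ∀ j ∈ C, 0 ≤ x i j)
    (hxy : ∀ i ∈ F, ∀ j ∈ C, x i j ≤ y i)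
    (hy1 : ∀ i ∈ F, y i ≤ 1)
    (ℓ : ℝ) (hℓ : 2 ≤ ℓ) :
    ∃ (xbar : X → X → ℝ) (ybar : X → ℝ),
      (∀ i j : X, 0 ≤ xbar i j) ∧
      (∀ i ∈ F, ybar i = 0 ∨ ybar i = 1) ∧
      (∀ j ∈ C, 1 ≤ ∑ i ∈ F, xbar i j) ∧
      (∀ i ∈ F, (1 - 1 / ℓ) * (L : ℝ) * ybar i ≤ ∑ j ∈ C, xbar i j ∧
        ∑ j ∈ C, xbar i j ≤ (2 - 1 / ℓ) * (U : ℝ) * ybar i) ∧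
      ((∑ i ∈ F, f i * ybar i) + ∑ i ∈ F, ∑ j ∈ C, dist i j * xbar i j ≤
        (10 * ℓ + 4) *
          ((∑ i ∈ F, f i * y i) + ∑ i ∈ F, ∑ j ∈ C, dist i j * x i j)) := by

  classical
  rcases C.eq_empty_or_nonempty with rfl | hC
  · refine ⟨fun _ _ => 0, fun _ => 0, by simp, by simp, by simp, by simp, ?_⟩
    have hUr : (0 : ℝ) < U := by exact_mod_cast lt_of_lt_of_le hL hLU
    have hy0 : ∀ i ∈ F, 0 ≤ y i := by
      intro i hi
      have h1 := hub i hi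
      rw [Finset.sum_empty] at h1
      exact nonneg_of_mul_nonneg_right h1 hUr
    have p1 : 0 ≤ ∑ i ∈ F, f i * y i :=
      Finset.sum_nonneg fun i hi => mul_nonneg (hf i hi) (hy0 i hi)
    simp only [mul_zero, Finset.sum_const_zero, Finset.sum_empty, add_zero]
    exact mul_nonneg (by linarith) p1
  · obtain ⟨xb, yb, h0, h1, h2, h3, h4⟩ := main_aux X F C f L U hf hL hLU x y hx1 hlb hub hx0 hxy
      hy1 ℓ hℓ hC
    have e : ∀ i ∈ F, ∀ j ∈ C, max (xb i j) 0 = xb i j := fun i hi j hj =>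
      max_eq_left (h0 i hi j hj)
    refine ⟨fun i j => max (xb i j) 0, yb, fun i j => le_max_right _ _, h1, ?_, ?_, ?_⟩
    · intro j hj
      rw [Finset.sum_congr rfl fun i hi => e i hi j hj]
      exact h2 j hj
    · intro i hi
      rw [Finset.sum_congr rfl fun j hj => e i hi j hj]
      exact h3 i hi
    · have : ∑ i ∈ F, ∑ j ∈ C, dist i j * max (xb i j) 0 = ∑ i ∈ F, ∑ j ∈ C, dist i j * xb i j :=
        Finset.sum_congr rfl fun i hi => Finset.sum_congr rfl fun j hj => by rw [e i hi j hj]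
      rw [this]
      exact h4
end

section
/- Let F and C be finite sets, d : F × C → ℝ with d(i,j) ≥ 0 for all i, j, and x : F × C → ℝ with x(i,j) ≥ 0 and Σ_{i∈F} x(i,j) = 1 for every j ∈ C. Then there exists σ : C → F such that for every i ∈ F, ⌊Σ_{j∈C} x(i,j)⌋ ≤ |σ⁻¹(i)| ≤ ⌈Σ_{j∈C} x(i,j)⌉, and Σ_{j∈C} d(σ(j), j) ≤ Σ_{i∈F} Σ_{j∈C} d(i,j)·x(i,j). -/
open Finset

lemma birk_perm {n : Type} [Fintype n] [DecidableEq n] (M c : n → n → ℝ)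
    (h0 : ∀ a b, 0 ≤ M a b) (hr : ∀ a, ∑ b, M a b = 1) (hc : ∀ b, ∑ a, M a b = 1) :
    ∃ σ : Equiv.Perm n, (∀ a, 0 < M a (σ a)) ∧ ∑ a, c a (σ a) ≤ ∑ a, ∑ b, c a b * M a b := by
  have hM : (Matrix.of M) ∈ doublyStochastic ℝ n := by
    rw [mem_doublyStochastic_iff_sum]
    exact ⟨h0, hr, hc⟩
  obtain ⟨w, hw0, hw1, hw⟩ := exists_eq_sum_perm_of_mem_doublyStochastic hM
  have hent : ∀ a b, M a b = ∑ σ : Equiv.Perm n, w σ * (if σ a = b then 1 else 0) := by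
    intro a b
    have := congrFun (congrFun hw a) b
    simp only [Matrix.sum_apply, Matrix.smul_apply, Matrix.of_apply, smul_eq_mul] at this
    rw [← this]
    refine Finset.sum_congr rfl fun σ _ => ?_
    simp [Equiv.Perm.permMatrix, PEquiv.toMatrix_apply, Equiv.toPEquiv_apply, eq_comm]
  have hcost : ∑ a, ∑ b, c a b * M a b = ∑ σ : Equiv.Perm n, w σ * ∑ a, c a (σ a) := by
    simp only [hent, Finset.mul_sum]
    have : ∀ a, ∑ b, ∑ σ : Equiv.Perm n, c a b * (w σ * (if σ a = b then 1 else 0))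
        = ∑ σ : Equiv.Perm n, w σ * c a (σ a) := by
      intro a
      rw [Finset.sum_comm]
      refine Finset.sum_congr rfl fun σ _ => ?_
      simp [mul_comm]
    simp only [this]
    exact Finset.sum_comm
  have hex : ∃ σ, 0 < w σ ∧ ∑ a, c a (σ a) ≤ ∑ a, ∑ b, c a b * M a b := by
    by_contra! hcon
    set K := ∑ a, ∑ b, c a b * M a b with hK
    have h1 : ∀ σ ∈ (univ : Finset (Equiv.Perm n)), w σ * K ≤ w σ * ∑ a, c a (σ a) := by
      intro σ _
      rcases (hw0 σ).eq_or_lt with h | h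
      · simp [← h]
      · exact mul_le_mul_of_nonneg_left (hcon σ h).le h.le
    have h2 : ∃ σ ∈ (univ : Finset (Equiv.Perm n)), w σ * K < w σ * ∑ a, c a (σ a) := by
      have : ∃ σ, 0 < w σ := by
        by_contra! h
        have : ∑ σ, w σ ≤ 0 := Finset.sum_nonpos fun σ _ => h σ
        linarith
      obtain ⟨σ, h⟩ := this
      exact ⟨σ, mem_univ _, mul_lt_mul_of_pos_left (hcon σ h) h⟩
    have h3 := Finset.sum_lt_sum h1 h2
    rw [← Finset.sum_mul, hw1, ← hcost] at h3
    linarith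
  obtain ⟨σ, hσ, hle⟩ := hex
  refine ⟨σ, fun a => ?_, hle⟩
  rw [hent]
  refine lt_of_lt_of_le (b := w σ * (if σ a = σ a then 1 else 0)) (by simpa using hσ) ?_
  exact Finset.single_le_sum (f := fun τ : Equiv.Perm n => w τ * (if τ a = σ a then 1 else 0))
    (fun τ _ => mul_nonneg (hw0 τ) (by split_ifs <;> norm_num)) (mem_univ σ)

lemma birk_equiv {A B : Type} [Fintype A] [Fintype B] (hcard : Fintype.card A = Fintype.card B)
    (M c : A → B → ℝ)
    (h0 : ∀ a b, 0 ≤ M a b) (hr : ∀ a, ∑ b, M a b = 1) (hc : ∀ b, ∑ a, M a b = 1) :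
    ∃ e : A ≃ B, (∀ a, 0 < M a (e a)) ∧ ∑ a, c a (e a) ≤ ∑ a, ∑ b, c a b * M a b := by
  classical
  let f : A ≃ B := Fintype.equivOfCardEq hcard
  obtain ⟨σ, h1, h2⟩ := birk_perm (fun a a' => M a (f a')) (fun a a' => c a (f a'))
    (fun a b => h0 _ _) (fun a => by rw [f.sum_comp (fun b => M a b)]; exact hr a)
    (fun b => hc _)
  refine ⟨σ.trans f, h1, h2.trans_eq ?_⟩
  exact Finset.sum_congr rfl fun a _ => f.sum_comp (fun b => c a b * M a b)

/-- fill level of slot k of a facility with load L -/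
noncomputable def slotW (L : ℝ) (k : ℕ) : ℝ := if k < ⌊L⌋₊ then 1 else L - ⌊L⌋₊

lemma slotW_nonneg {L : ℝ} (hL : 0 ≤ L) (k : ℕ) : 0 ≤ slotW L k := by
  unfold slotW
  split_ifs
  · norm_num
  · have := Nat.floor_le hL
    linarith

lemma slotW_le (L : ℝ) (k : ℕ) : slotW L k ≤ 1 := by
  unfold slotW
  split_ifs
  · norm_num
  · have := Nat.lt_floor_add_one L
    linarith

lemma slotW_sum {L : ℝ} (hL : 0 ≤ L) : ∑ k : Fin ⌈L⌉₊, slotW L k = L := by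
  rw [Fin.sum_univ_eq_sum_range (fun k => slotW L k)]
  have hs : ∑ k ∈ range ⌊L⌋₊, slotW L k = ⌊L⌋₊ := by
    rw [Finset.sum_congr rfl (g := fun _ => (1:ℝ))]
    · simp
    · intro k hk
      simp [slotW, Finset.mem_range.1 hk]
  have h1 := Nat.floor_le_ceil L
  have h2 := Nat.ceil_le_floor_add_one L
  rcases h1.eq_or_lt with h | h
  · rw [← h, hs]
    apply le_antisymm (Nat.floor_le hL)
    rw [h]; exact Nat.le_ceil L
  · have : ⌈L⌉₊ = ⌊L⌋₊ + 1 := by omega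
    rw [this, Finset.sum_range_succ, hs]
    simp [slotW]

/-- Integrality of min-cost flow: a fractional assignment `x` of unit client
demands to facilities can be rounded to an integral assignment `σ` whose loads lie between the
floor and the ceiling of the fractional loads, without increasing the connection cost. -/
theorem integral_assignment_rounding
    (F C : Type) [Fintype F] [Fintype C] [DecidableEq F]
    (d : F → C → ℝ) (hd : ∀ i j, 0 ≤ d i j)
    (x : F → C → ℝ) (hx0 : ∀ i j, 0 ≤ x i j)
    (hx1 : ∀ j : C, ∑ i, x i j = 1) :
    ∃ σ : C → F,
      (∀ i : F,
        ⌊∑ j, x i j⌋ ≤ ((univ.filter (fun j : C => σ j = i)).card : ℤ) ∧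
        ((univ.filter (fun j : C => σ j = i)).card : ℤ) ≤ ⌈∑ j, x i j⌉) ∧
      (∑ j, d (σ j) j) ≤ ∑ i, ∑ j, d i j * x i j := by
  classical
  obtain ⟨L, hLdef⟩ : ∃ L : F → ℝ, ∀ i, L i = ∑ j, x i j := ⟨_, fun _ => rfl⟩
  have hL0 : ∀ i, 0 ≤ L i := fun i => by
    rw [hLdef]; exact Finset.sum_nonneg fun j _ => hx0 i j
  have hxL : ∀ i j, x i j / L i * L i = x i j := by
    intro i j
    by_cases h : L i = 0
    · have hx : x i j ≤ L i := by
        rw [hLdef]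
        exact Finset.single_le_sum (f := fun j => x i j) (fun j _ => hx0 i j) (mem_univ j)
      have := hx0 i j
      rw [h] at hx ⊢
      linarith
    · exact div_mul_cancel₀ _ h
  let B := Σ i : F, Fin ⌈L i⌉₊
  have hWtot : ∑ s : B, slotW (L s.1) s.2 = Fintype.card C := by
    rw [Fintype.sum_sigma]
    simp only [slotW_sum (hL0 _)]
    simp only [hLdef]
    rw [Finset.sum_comm]
    simp [hx1]
  have hBC : Fintype.card C ≤ Fintype.card B := by
    have : (Fintype.card C : ℝ) ≤ Fintype.card B := by
      rw [← hWtot]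
      calc _ ≤ ∑ s : B, (1:ℝ) := Finset.sum_le_sum fun s _ => slotW_le _ _
        _ = _ := by simp
    exact_mod_cast this
  obtain ⟨D, hD⟩ := Nat.exists_eq_add_of_le hBC
  have hDtot : ∑ s : B, (1 - slotW (L s.1) s.2) = D := by
    rw [Finset.sum_sub_distrib, hWtot]
    simp [hD]
  have hDs : ∀ s : B, (D:ℝ) * ((1 - slotW (L s.1) s.2) / D) = 1 - slotW (L s.1) s.2 := by
    intro s
    by_cases h : (D:ℝ) = 0
    · have h1 : 1 - slotW (L s.1) s.2 ≤ D := by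
        rw [← hDtot]
        exact Finset.single_le_sum (f := fun s : B => 1 - slotW (L s.1) s.2)
          (fun s _ => sub_nonneg.2 (slotW_le _ _)) (mem_univ s)
      have h2 := slotW_le (L s.1) s.2
      rw [h] at h1 ⊢
      linarith
    · field_simp
  let M : C ⊕ Fin D → B → ℝ := fun a s => Sum.elim
    (fun j => x s.1 j / L s.1 * slotW (L s.1) s.2) (fun _ => (1 - slotW (L s.1) s.2) / D) a
  let c : C ⊕ Fin D → B → ℝ := fun a s => Sum.elim (fun j => d s.1 j) (fun _ => 0) a
  have hfib : ∀ (j : C) (g : F → ℝ),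
      ∑ s : B, g s.1 * (x s.1 j / L s.1 * slotW (L s.1) s.2) = ∑ i, g i * x i j := by
    intro j g
    rw [Fintype.sum_sigma]
    refine Finset.sum_congr rfl fun i _ => ?_
    dsimp only
    rw [← Finset.mul_sum, ← Finset.mul_sum, slotW_sum (hL0 i), hxL]
  obtain ⟨e, he, hcost⟩ := birk_equiv (A := C ⊕ Fin D) (B := B) (by simp [hD]) M c
    (by
      rintro (j | k) s
      · exact mul_nonneg (div_nonneg (hx0 _ _) (hL0 _)) (slotW_nonneg (hL0 _) _)
      · exact div_nonneg (sub_nonneg.2 (slotW_le _ _)) (Nat.cast_nonneg _))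
    (by
      rintro (j | k)
      · have := hfib j (fun _ => 1)
        simp only [one_mul, hx1] at this
        exact this
      · have hpos : (D:ℝ) ≠ 0 := by
          have := k.pos
          positivity
        change ∑ s : B, (1 - slotW (L s.1) s.2) / D = 1
        rw [← Finset.sum_div, hDtot, div_self hpos])
    (by
      intro s
      rw [Fintype.sum_sum_type]
      change ∑ j, x s.1 j / L s.1 * slotW (L s.1) s.2
        + ∑ _k : Fin D, (1 - slotW (L s.1) s.2) / D = 1
      rw [Finset.sum_const, nsmul_eq_mul, Finset.card_univ, Fintype.card_fin, hDs,
        ← Finset.sum_mul, ← Finset.sum_div, ← hLdef]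
      have hpos : L s.1 ≠ 0 := by
        intro h
        have h2 := s.2.pos
        rw [h] at h2
        simp at h2
      rw [div_self hpos]
      ring)
  refine ⟨fun j => (e (Sum.inl j)).1, fun i => ?_, ?_⟩
  · rw [← hLdef]
    constructor
    · rw [← Int.natCast_floor_eq_floor (hL0 i)]
      norm_cast
      have hmand : ∀ k : Fin ⌊L i⌋₊, ∃ j : C,
          e (Sum.inl j) = ⟨i, Fin.castLE (Nat.floor_le_ceil _) k⟩ := by
        intro k
        obtain ⟨a, ha⟩ := e.surjective ⟨i, Fin.castLE (Nat.floor_le_ceil _) k⟩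
        rcases a with j | t
        · exact ⟨j, ha⟩
        · exfalso
          have := he (Sum.inr t)
          rw [ha] at this
          simp [M, slotW] at this
      choose g hg using hmand
      have hinj : Function.Injective g := by
        intro k k' h
        have h1 := hg k
        rw [h, hg k'] at h1
        have h2 : (Fin.castLE (Nat.floor_le_ceil (L i)) k') = Fin.castLE _ k :=
          eq_of_heq (Sigma.mk.inj h1).2
        exact (Fin.castLE_injective _ h2).symm
      calc ⌊L i⌋₊ = (univ.image g).card := by
            rw [Finset.card_image_of_injective _ hinj]; simp
        _ ≤ _ := by
            apply Finset.card_le_card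
            intro j hj
            obtain ⟨k, _, rfl⟩ := Finset.mem_image.1 hj
            simp [hg k]
    · rw [← Int.natCast_ceil_eq_ceil (hL0 i)]
      norm_cast
      calc _ ≤ ((univ : Finset (Fin ⌈L i⌉₊)).image (fun k => (⟨i, k⟩ : B))).card := by
            apply Finset.card_le_card_of_injOn (fun j => e (Sum.inl j))
            · intro j hj
              have hj' : (e (Sum.inl j)).1 = i := by simpa using hj
              generalize hs : e (Sum.inl j) = s at hj'
              obtain ⟨i', k⟩ := s
              dsimp only at hj'
              subst hj'
              simp [hs]
            · intro j _ j' _ h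
              exact Sum.inl_injective (e.injective h)
        _ ≤ _ := Finset.card_image_le
        _ = _ := by simp
  · rw [Fintype.sum_sum_type, Fintype.sum_sum_type] at hcost
    have h1 : ∀ j, ∑ s : B, c (Sum.inl j) s * M (Sum.inl j) s = ∑ i, d i j * x i j :=
      fun j => hfib j (fun i => d i j)
    simp only [h1] at hcost
    rw [Finset.sum_comm]
    simpa [c] using hcost
end

section
/- Let X be a metric space, F ⊆ X a finite set of facilities, C ⊆ X a finite set of clients, f : F → ℝ with f i ≥ 0, and L, U ∈ ℕ with 0 < L ≤ U. Let σᵗ : C → F be any assignment and let Fᵗ = σᵗ(C) be its image. Define modified opening costs f¹ i = 0 if i ∈ Fᵗ and f¹ i = f i otherwise. Suppose (F*, σ*) is a feasible solution of the original instance, i.e., F* ⊆ F, σ* : C → F*, and L ≤ |σ*⁻¹(i)| ≤ U for every i ∈ F*. Then there exist F'' ⊆ F and σ'' : C → F'' with L ≤ |σ''⁻¹(i)| ≤ U for every i ∈ F'' such that Σ_{i∈F''} f¹ i + Σ_{j∈C} dist(σᵗ(j), σ''(j)) ≤ (Σ_{i∈Fᵗ} f i + Σ_{j∈C} dist(j,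 σᵗ(j))) + (Σ_{i∈F*} f i + Σ_{j∈C} dist(j, σ*(j))). -/
open Finset

/-- Bounding the optimum of instance `I₁` (clients moved to the facilities
serving them in the tri-criteria solution `σᵗ`, opening costs zeroed on `Fᵗ = σᵗ(C)`): any
feasible solution `(F*, σ*)` of the original instance yields a feasible solution of `I₁` of
cost at most `Cost_I(Sᵗ) + Cost_I(F*, σ*)`. -/
theorem instance_I1_opt_bound
    (X : Type) [MetricSpace X] [DecidableEq X]
    (F C : Finset X) (f : X → ℝ) (L U : ℕ)
    (hf : ∀ i ∈ F, 0 ≤ f i) (hL : 0 < L) (hLU : L ≤ U)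
    (σt : X → X) (hσt : ∀ j ∈ C, σt j ∈ F)
    (Fstar : Finset X) (σstar : X → X)
    (hFstar : Fstar ⊆ F) (hσstar : ∀ j ∈ C, σstar j ∈ Fstar)
    (hfeas : ∀ i ∈ Fstar, L ≤ (C.filter (fun j => σstar j = i)).card ∧
      (C.filter (fun j => σstar j = i)).card ≤ U) :
    ∃ (F'' : Finset X) (σ'' : X → X), F'' ⊆ F ∧ (∀ j ∈ C, σ'' j ∈ F'') ∧
      (∀ i ∈ F'', L ≤ (C.filter (fun j => σ'' j = i)).card ∧
        (C.filter (fun j => σ'' j = i)).card ≤ U) ∧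
      (∑ i ∈ F'', (if i ∈ C.image σt then (0 : ℝ) else f i)) +
          (∑ j ∈ C, dist (σt j) (σ'' j)) ≤
        ((∑ i ∈ C.image σt, f i) + ∑ j ∈ C, dist j (σt j)) +
        ((∑ i ∈ Fstar, f i) + ∑ j ∈ C, dist j (σstar j)) := by
  refine ⟨Fstar, σstar, hFstar, hσstar, hfeas, ?_⟩
  have h1 : ∑ i ∈ Fstar, (if i ∈ C.image σt then (0 : ℝ) else f i) ≤ ∑ i ∈ Fstar, f i := by
    apply Finset.sum_le_sum
    intro i hi
    split_ifs
    · exact hf i (hFstar hi)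
    · exact le_rfl
  have h2 : 0 ≤ ∑ i ∈ C.image σt, f i := by
    apply Finset.sum_nonneg
    intro i hi
    obtain ⟨j, hj, rfl⟩ := Finset.mem_image.1 hi
    exact hf _ (hσt j hj)
  have h3 : ∑ j ∈ C, dist (σt j) (σstar j) ≤
      ∑ j ∈ C, dist j (σt j) + ∑ j ∈ C, dist j (σstar j) := by
    rw [← Finset.sum_add_distrib]
    apply Finset.sum_le_sum
    intro j _
    exact dist_triangle_left _ _ _
  linarith
end

section
/- Let X be a metric space, F ⊆ X a finite set of facilities, Fᵗ ⊆ F nonempty, C a finite set of clients with positions p : C → X satisfying p(j) ∈ Fᵗ for every j ∈ C, and L ∈ ℕ. Suppose σ¹ : C → F satisfies |σ¹⁻¹(i)| ≥ L for every i in the image of σ¹. Then there exists σ² : C → Fᵗ such that |σ²⁻¹(i')| ≥ L for every i' in the image of σ², and Σ_{j∈C} dist(p(j), σ²(j)) ≤ 2·Σ_{j∈C} dist(p(j), σ¹(j)). -/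
open Finset

/-- Reduction from `I₁` to the lower-bounded instance `I₂`: restricting the
facility set to the nonempty subset `Fᵗ` (with all clients located at points of `Fᵗ`) at most
doubles the connection cost, while preserving the lower bound `L` on the loads. -/
theorem instance_I2_reduction
    (X : Type) [MetricSpace X] [DecidableEq X]
    (F Ft : Finset X) (hFt : Ft ⊆ F) (hFtne : Ft.Nonempty)
    (C : Type) [Fintype C] (p : C → X) (hp : ∀ j : C, p j ∈ Ft)
    (L : ℕ)
    (σ1 : C → X) (hσ1 : ∀ j : C, σ1 j ∈ F)
    (hlb1 : ∀ i : X, (∃ j : C, σ1 j = i) →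
      L ≤ (univ.filter (fun j : C => σ1 j = i)).card) :
    ∃ σ2 : C → X, (∀ j : C, σ2 j ∈ Ft) ∧
      (∀ i : X, (∃ j : C, σ2 j = i) →
        L ≤ (univ.filter (fun j : C => σ2 j = i)).card) ∧
      (∑ j : C, dist (p j) (σ2 j)) ≤ 2 * ∑ j : C, dist (p j) (σ1 j) := by
  have h : ∀ x : X, ∃ y ∈ Ft, ∀ z ∈ Ft, dist x y ≤ dist x z := fun x =>
    Ft.exists_min_image (fun y => dist x y) hFtne
  choose n hn hmin using h
  refine ⟨fun j => n (σ1 j), fun j => hn _, ?_, ?_⟩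
  · rintro i ⟨j, rfl⟩
    refine (hlb1 (σ1 j) ⟨j, rfl⟩).trans (Finset.card_le_card ?_)
    intro k hk
    simp only [Finset.mem_filter, Finset.mem_univ, true_and] at hk ⊢
    rw [hk]
  · rw [Finset.mul_sum]
    refine Finset.sum_le_sum fun j _ => ?_
    have h1 := dist_triangle (p j) (σ1 j) (n (σ1 j))
    have h2 := hmin (σ1 j) (p j) (hp j)
    rw [dist_comm (σ1 j) (p j)] at h2
    linarith
end

section
/- Let T be a finite set, n : T → ℕ, L, U ∈ ℕ with L ≤ U, and β ≥ 1 a real with n i ≤ β·U for every i ∈ T. Define d i = max(L − n i, 0) and u i = max(L, n i) for i ∈ T. Let ρ : T × T → ℝ with ρ(i', i) ≥ 0 for all i', i, satisfying: Σ_{i∈T} ρ(i', i) = d i' for every i' ∈ T; Σ_{i'∈T} ρ(i', i) ≤ u i for every i ∈ T; and for every i ∈ T, if Σ_{i'∈T} ρ(i', i) > 0 then ρ(i, i) = d i. Define ρ¹ : T × T → ℝ by ρ¹(i, i') = ρ(i', i) for i ≠ i' and ρ¹(i', i') = n i'. Then: (i) Σ_{i' ∈ T, i' ≠ i} ρ¹(i,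 i') ≤ n i for every i ∈ T; and (ii) Σ_{i∈T} ρ¹(i, i') ≤ max(L, n i') ≤ β·U for every i' ∈ T. -/
open Finset

/-- Type-1 reassignments: given the demands `d i = max(L - n i, 0)` and
capacities `u i = max(L, n i)` of the capacitated instance `I_cap` and a feasible demand
assignment `ρ` in which every facility serving anything serves its own demand fully, the
induced client reassignment `ρ¹` sends out at most `n i` clients from each location `i` and
assigns at most `max(L, n i') ≤ β·U` clients to each location `i'`. -/
theorem type1_reassignment_bounds
    (T : Type) [Fintype T] [DecidableEq T]
    (n : T → ℕ) (L U : ℕ) (hLU : L ≤ U)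
    (β : ℝ) (hβ : 1 ≤ β) (hn : ∀ i : T, (n i : ℝ) ≤ β * U)
    (ρ : T → T → ℝ) (hρ0 : ∀ i' i : T, 0 ≤ ρ i' i)
    (hdem : ∀ i' : T, (∑ i, ρ i' i) = ((L - n i' : ℕ) : ℝ))
    (hcap : ∀ i : T, (∑ i', ρ i' i) ≤ ((max L (n i) : ℕ) : ℝ))
    (hself : ∀ i : T, 0 < (∑ i', ρ i' i) → ρ i i = ((L - n i : ℕ) : ℝ)) :
    (∀ i : T,
      (∑ i' ∈ univ.filter (fun i' => i' ≠ i),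
        (if i = i' then (n i' : ℝ) else ρ i' i)) ≤ (n i : ℝ)) ∧
    (∀ i' : T,
      (∑ i, (if i = i' then (n i' : ℝ) else ρ i' i)) ≤ ((max L (n i') : ℕ) : ℝ) ∧
      ((max L (n i') : ℕ) : ℝ) ≤ β * U) := by
  have hmax : ∀ i : T, ((max L (n i) : ℕ) : ℝ) = ((L - n i : ℕ) : ℝ) + (n i : ℝ) := by
    intro i
    rw [← Nat.cast_add]
    congr 1
    omega
  refine ⟨fun i => ?_, fun i' => ⟨?_, ?_⟩⟩
  · have h1 : (∑ i' ∈ univ.filter (fun i' => i' ≠ i),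
        (if i = i' then (n i' : ℝ) else ρ i' i)) = ∑ i' ∈ univ.erase i, ρ i' i := by
      rw [Finset.filter_ne']
      refine Finset.sum_congr rfl fun j hj => ?_
      rw [if_neg (Finset.ne_of_mem_erase hj).symm]
    have h2 := Finset.add_sum_erase univ (fun i' => ρ i' i) (mem_univ i)
    have h3 := hcap i
    have h4 := hρ0 i i
    have h5 : (0 : ℝ) ≤ n i := Nat.cast_nonneg _
    rw [hmax] at h3
    rw [h1]
    by_cases h : 0 < ∑ i', ρ i' i
    · have := hself i h
      linarith
    · linarith
  · have h2 := Finset.add_sum_erase univ (fun i => ρ i' i) (mem_univ i')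
    have h3 := hdem i'
    have h4 := hρ0 i' i'
    rw [hmax, ← Finset.add_sum_erase univ _ (mem_univ i'), if_pos rfl]
    have h1 : (∑ i ∈ univ.erase i', (if i = i' then (n i' : ℝ) else ρ i' i))
        = ∑ i ∈ univ.erase i', ρ i' i := by
      refine Finset.sum_congr rfl fun j hj => ?_
      rw [if_neg (Finset.ne_of_mem_erase hj)]
    rw [h1]
    linarith
  · rw [Nat.cast_max]
    refine max_le ?_ (hn i')
    have h1 : (L : ℝ) ≤ U := by exact_mod_cast hLU
    have h2 : (0 : ℝ) ≤ U := Nat.cast_nonneg _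
    nlinarith
end
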